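/- Let k ≥ 1 be an integer and let G be a planar simple graph with girth at least 6. Then the k-frugal chromatic number satisfies χ_k(G) ≤ ⌈(Δ(G) + 4)/k⌉ + 6. -/

import Mathlib

open SimpleGraph

/-- A drawing of a simple graph in the plane: vertices are mapped to distinct points,
edges to arcs (injective continuous curves parametrised on `[0,1]`) joining the images of
their endpoints, whose interiors avoid the vertex points and each other. -/
structure PlaneEmbedding {V : Type*} (G : SimpleGraph V) where
  pos : V → ℝ × ℝ
  inj : Function.Injective pos
  arc : G.edgeSet → ℝ → ℝ × ℝ
  arc_cont : ∀ e, ContinuousOn (arc e) (Set.Icc 0 1)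
  arc_inj : ∀ e, Set.InjOn (arc e) (Set.Icc 0 1)
  arc_ends : ∀ e : G.edgeSet, ∃ u v : V, (e : Sym2 V) = s(u, v) ∧
      arc e 0 = pos u ∧ arc e 1 = pos v
  arc_avoid : ∀ e : G.edgeSet, ∀ t ∈ Set.Ioo (0:ℝ) 1, arc e t ∉ Set.range pos
  arc_disjoint : ∀ e f : G.edgeSet, e ≠ f → ∀ s ∈ Set.Ioo (0:ℝ) 1, ∀ t ∈ Set.Ioo (0:ℝ) 1,
      arc e s ≠ arc f t

/-- A graph is planar if it admits a drawing in the plane. -/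
def SimpleGraph.IsPlanar {V : Type*} (G : SimpleGraph V) : Prop :=
  Nonempty (PlaneEmbedding G)

/-- A `k`-frugal colouring: a proper vertex colouring in which no colour appears more than
`k` times in the neighbourhood of any vertex. -/
def SimpleGraph.IsFrugalColoring {V α : Type*} (G : SimpleGraph V) (k : ℕ) (c : V → α) : Prop :=
  (∀ u v, G.Adj u v → c u ≠ c v) ∧
  ∀ (v : V) (a : α), {u | u ∈ G.neighborSet v ∧ c u = a}.ncard ≤ k

/-- The `k`-frugal chromatic number `χ_k(G)`: the least number of colours in a `k`-frugal
colouring of `G`. -/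
noncomputable def SimpleGraph.frugalChromaticNumber {V : Type*} (G : SimpleGraph V) (k : ℕ) : ℕ :=
  sInf {n : ℕ | ∃ c : V → ℕ, (∀ v, c v < n) ∧ G.IsFrugalColoring k c}

/-!
By Euler's formula a plane graph of girth at least six has fewer than `3 / 2` edges per vertex, and
so has each of its subgraphs. Give each vertex the charge `2 * degree - 6`, whose total is then
negative, and let vertices of degree two collect charge from all their neighbours and vertices of
degree three from their neighbours of degree at least six. A vertex that stays in debt exhibits
a leaf or two adjacent light vertices, that is, vertices with at most five neighbours and few
vertices at distance two. Deleting an edge there, colouring the rest by induction and recolouring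
its light ends greedily gives the bound.

Of Euler's formula only the lower bound on the number of faces is needed, together with the facts
that an edge borders at most two faces and that a face which is not the only one has a cycle on
its boundary. They follow from Eilenberg's criterion: two points `p` and `q` lie in the same
component of the complement of a compact plane set `K` if and only if `(z - p) / (z - q)` has a
continuous logarithm on `K`. On a drawn forest every nonvanishing continuous function has a
logarithm, and when an arc is added to a connected set, logarithms on the two pieces fail to fit
together only by one integer.
-/

section ContinuousLogarithms

open Complex Set Topology Metric

variable {X : Type*} [TopologicalSpace X]

/-- `f` has a continuous logarithm on `S`. A nonvanishing continuous function has one exactly when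
its restriction to `S` is null-homotopic in `ℂ \ {0}`. -/
def HasContinuousLogOn (f : X → ℂ) (S : Set X) : Prop :=
  ∃ g : X → ℂ, ContinuousOn g S ∧ ∀ z ∈ S, exp (g z) = f z

/-- Every nonvanishing continuous function on `S` has a continuous logarithm, i.e. the first
cohomotopy group of `S` vanishes. -/
def AdmitsContinuousLogs (S : Set X) : Prop :=
  ∀ f : X → ℂ, ContinuousOn f S → (∀ z ∈ S, f z ≠ 0) → HasContinuousLogOn f S

namespace HasContinuousLogOn

variable {f f' : X → ℂ} {S T : Set X}

theorem mono (h : HasContinuousLogOn f S) (hTS : T ⊆ S) : HasContinuousLogOn f T :=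
  let ⟨g, hg, hgf⟩ := h
  ⟨g, hg.mono hTS, fun z hz ↦ hgf z (hTS hz)⟩

theorem congr (h : HasContinuousLogOn f S) (hff' : EqOn f f' S) : HasContinuousLogOn f' S :=
  let ⟨g, hg, hgf⟩ := h
  ⟨g, hg, fun z hz ↦ (hgf z hz).trans (hff' hz)⟩

theorem of_domRestrict (h : HasContinuousLogOn (S.domRestrict f) univ) :
    HasContinuousLogOn f S := by
  classical
  obtain ⟨g, hg, hgf⟩ := h
  refine ⟨fun z ↦ if hz : z ∈ S then g ⟨z, hz⟩ else 0, ?_, fun z hz ↦ ?_⟩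
  · rw [continuousOn_iff_continuous_domRestrict]
    convert continuousOn_univ.1 hg using 1
    ext z
    simp
  · simpa [hz] using hgf ⟨z, hz⟩ (mem_univ _)

end HasContinuousLogOn

theorem hasContinuousLogOn_univ_of_homotopy {F : X → unitInterval → ℂ}
    (hF : Continuous (Function.uncurry F)) (hne : ∀ x t, F x t ≠ 0) (h0 : ∀ x, F x 0 = 1) :
    HasContinuousLogOn (F · 1) univ := by
  let H : C(unitInterval × X, {z : ℂ // z ≠ 0}) :=
    ⟨fun y ↦ ⟨F y.2 y.1, hne _ _⟩, (hF.comp continuous_swap).subtype_mk _⟩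
  have H0 : ∀ x, H (0, x) = ⟨exp ((ContinuousMap.const X (0 : ℂ)) x), exp_ne_zero _⟩ := fun x ↦
    Subtype.ext ((h0 x).trans exp_zero.symm)
  let L := isCoveringMap_exp.liftHomotopy H (ContinuousMap.const X (0 : ℂ)) H0
  have hL := isCoveringMap_exp.liftHomotopy_lifts H (ContinuousMap.const X (0 : ℂ)) H0
  exact ⟨fun x ↦ L (1, x), by fun_prop, fun x _ ↦ congrArg Subtype.val (congrFun hL (1, x))⟩

theorem admitsContinuousLogs_univ [SimplyConnectedSpace X] [LocallyPathConnectedSpace X] :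
    AdmitsContinuousLogs (univ : Set X) := by
  intro f hf hne
  obtain ⟨x₀⟩ : Nonempty X := inferInstance
  obtain ⟨g, ⟨-, hg⟩, -⟩ := isCoveringMapOn_exp.existsUnique_continuousMap_lifts
    ⟨f, continuousOn_univ.1 hf⟩ (exp_log (hne x₀ trivial)) (fun x ↦ hne x trivial)
  exact ⟨g, g.continuous.continuousOn, fun x _ ↦ congrFun hg x⟩

theorem admitsContinuousLogs_image_Icc [T4Space X] {a b : ℝ} (hab : a ≤ b) {α : ℝ → X}
    (hα : ContinuousOn α (Icc a b)) (hinj : InjOn α (Icc a b)) :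
    AdmitsContinuousLogs (α '' Icc a b) := by
  intro f hf hne
  have hmem (t : ℝ) : α (projIcc a b hab t) ∈ α '' Icc a b :=
    mem_image_of_mem α (projIcc a b hab t).2
  have hcont : Continuous fun t ↦ α (projIcc a b hab t) := hα.domRestrict.Icc_extend'
  obtain ⟨g, hg, hgf⟩ := admitsContinuousLogs_univ (fun t ↦ f (α (projIcc a b hab t)))
    (hf.comp_continuous hcont hmem).continuousOn (fun t _ ↦ hne _ (hmem t))
  obtain ⟨G, hG⟩ := ContinuousMap.exists_extension'
    (hα.domRestrict.isClosedEmbedding (injOn_iff_injective.1 hinj))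
    ⟨(Icc a b).domRestrict g, (continuousOn_univ.1 hg).continuousOn.domRestrict⟩
  refine ⟨G, G.continuous.continuousOn, ?_⟩
  rintro _ ⟨t, ht, rfl⟩
  have hGt : G (α t) = g t := congrFun hG ⟨t, ht⟩
  simp [hGt, hgf t trivial, projIcc_of_mem hab ht]

theorem hasContinuousLogOn_sub_div_sub_of_joinedIn {S : Set ℂ} {a b : ℂ} (h : JoinedIn Sᶜ b a) :
    HasContinuousLogOn (fun z ↦ (z - a) / (z - b)) S := by
  obtain ⟨γ, hγ⟩ := h
  have hne (z : S) (t) : (z : ℂ) - γ t ≠ 0 :=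
    sub_ne_zero.2 fun hz ↦ hγ t (hz ▸ z.2)
  have hb (z : S) : (z : ℂ) - b ≠ 0 := by simpa using hne z 0
  have hF : Continuous fun y : S × unitInterval ↦ ((y.1 : ℂ) - γ y.2) / (y.1 - b) :=
    Continuous.div (by fun_prop) (by fun_prop) fun y ↦ hb y.1
  have hlog := hasContinuousLogOn_univ_of_homotopy
    (F := fun (z : S) t ↦ ((z : ℂ) - γ t) / (z - b)) hF
    (fun z t ↦ div_ne_zero (hne z t) (hb z)) (fun z ↦ by simp [hb])
  exact .of_domRestrict (hlog.congr fun z _ ↦ by simp)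

theorem exists_sub_eq_int_mul_two_pi_mul_I {x y : ℂ} (h : exp x = exp y) :
    ∃ n : ℤ, x - y = n * (2 * Real.pi * I) := by
  obtain ⟨n, hn⟩ := exp_eq_exp_iff_exists_int.1 h
  exact ⟨n, by rw [hn]; ring⟩

/-- The circle `t ↦ p + R e^{it}` turns a logarithm of `(z - p) ^ n` into a primitive of the
constant `n i`, which is periodic only for `n = 0`. -/
theorem eq_zero_of_hasContinuousLogOn_sphere {p : ℂ} {n : ℤ} {R : ℝ} (hR : 0 < R)
    (h : HasContinuousLogOn (fun z ↦ (z - p) ^ n) (sphere p R)) : n = 0 := by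
  obtain ⟨g, hg, hgexp⟩ := h
  have hcircle (t : ℝ) : circleMap p R t ∈ sphere p R := circleMap_mem_sphere p hR.le t
  have hcont : Continuous fun t : ℝ ↦ g (circleMap p R t) - n * (t * I) :=
    (hg.comp_continuous (continuous_circleMap p R) hcircle).sub (by fun_prop)
  have hexp (t : ℝ) : exp (g (circleMap p R t) - n * (t * I)) = (R : ℂ) ^ n := by
    rw [exp_sub, hgexp _ (hcircle t), exp_int_mul]
    simp [circleMap, mul_zpow, zpow_ne_zero n (exp_ne_zero (t * I))]
  have hperiod := isCoveringMap_exp.constOn_of_comp isPreconnected_univ hcont.continuousOn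
    (fun s _ t _ ↦ Subtype.ext ((hexp s).trans (hexp t).symm)) (mem_univ 0)
    (mem_univ (2 * Real.pi))
  have hcircle_period : circleMap p R (2 * Real.pi) = circleMap p R 0 := by
    simpa using periodic_circleMap p R 0
  simpa [hcircle_period, eq_comm (a := g _), Real.pi_ne_zero] using hperiod

/-- By Tietze, a logarithm on `frontier U` would let one replace `(z - p) ^ n` inside `U` by a
nonvanishing function; the result has a logarithm on `ℂ`, hence on a large circle around `p`. -/
theorem eq_zero_of_hasContinuousLogOn_frontier {U : Set ℂ} (hU : IsOpen U)
    (hb : Bornology.IsBounded U) {p : ℂ} (hp : p ∈ U) {h : ℂ → ℂ} {n : ℤ}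
    (hh : ContinuousOn h (closure U)) (hne : ∀ z ∈ closure U, h z ≠ 0)
    (hlog : HasContinuousLogOn (fun z ↦ (z - p) ^ n * h z) (frontier U)) : n = 0 := by
  classical
  obtain ⟨g, hg, hgexp⟩ := hlog
  obtain ⟨g', hg'⟩ := ContinuousMap.exists_restrict_eq isClosed_frontier
    ⟨(frontier U).domRestrict g, hg.domRestrict⟩
  have hg'g (z) (hz : z ∈ frontier U) : g' z = g z := DFunLike.congr_fun hg' ⟨z, hz⟩
  let F : ℂ → ℂ := U.piecewise (fun z ↦ exp (g' z) / h z) (fun z ↦ (z - p) ^ n)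
  have hsub (z) (hz : z ∉ U) : z - p ≠ 0 := sub_ne_zero.2 fun h ↦ hz (h ▸ hp)
  have hF : Continuous F := by
    refine continuous_piecewise (fun z hz ↦ ?_) (ContinuousOn.div (by fun_prop) hh hne) ?_
    · rw [hg'g z hz, hgexp z hz, mul_div_cancel_right₀ _ (hne z (frontier_subset_closure hz))]
    · rw [hU.isClosed_compl.closure_eq]
      exact ContinuousOn.zpow₀ (by fun_prop) n fun z hz ↦ Or.inl (hsub z hz)
  have hFne (z) : F z ≠ 0 := by
    by_cases hz : z ∈ U
    · simpa [F, hz] using hne z (subset_closure hz)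
    · simpa [F, hz] using zpow_ne_zero n (hsub z hz)
  obtain ⟨R, hR, hUR⟩ := hb.subset_ball_lt 0 p
  have hFlog := admitsContinuousLogs_univ F hF.continuousOn fun z _ ↦ hFne z
  refine eq_zero_of_hasContinuousLogOn_sphere hR
    ((hFlog.mono (subset_univ (sphere p R))).congr fun z hz ↦ ?_)
  exact piecewise_eq_of_notMem _ _ _ fun hzU ↦ (mem_ball.1 (hUR hzU)).ne hz

theorem not_hasContinuousLogOn_sub_div_sub {a b : ℂ} (hab : a ≠ b) :
    ¬ HasContinuousLogOn (fun z ↦ (z - a) / (z - b)) {a, b}ᶜ := by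
  intro hlog
  have hr : 0 < dist b a / 2 := half_pos (dist_pos.2 hab.symm)
  have hb : ∀ z ∈ closedBall a (dist b a / 2), z ≠ b := by
    rintro z hz rfl
    linarith [mem_closedBall.1 hz]
  have hclosure : closure (ball a (dist b a / 2)) ⊆ closedBall a (dist b a / 2) :=
    closure_ball_subset_closedBall
  refine one_ne_zero <| eq_zero_of_hasContinuousLogOn_frontier (p := a) (n := 1)
    (h := fun z ↦ (z - b)⁻¹) isOpen_ball isBounded_ball (mem_ball_self hr)
    (ContinuousOn.inv₀ (by fun_prop) fun z hz ↦ sub_ne_zero.2 (hb z (hclosure hz)))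
    (fun z hz ↦ inv_ne_zero (sub_ne_zero.2 (hb z (hclosure hz)))) ?_
  refine (hlog.mono fun z hz ↦ ?_).congr fun z _ ↦ by simp [div_eq_mul_inv]
  have hz := frontier_ball_subset_sphere hz
  rintro (rfl | rfl)
  · exact hr.ne (by simpa using hz)
  · exact hb _ (sphere_subset_closedBall hz) rfl

theorem hasContinuousLogOn_union {f g h : X → ℂ} {S T : Set X}
    (hST : IsOpen S ∧ IsOpen T ∨ IsClosed S ∧ IsClosed T) (hg : ContinuousOn g S)
    (hh : ContinuousOn h T) (hgf : ∀ z ∈ S, exp (g z) = f z) (hhf : ∀ z ∈ T, exp (h z) = f z)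
    (hgh : EqOn g h (S ∩ T)) : HasContinuousLogOn f (S ∪ T) := by
  classical
  have hG : EqOn (S.piecewise g h) g S := piecewise_eqOn S g h
  have hH : EqOn (S.piecewise g h) h T := fun z hz ↦ by
    by_cases hzS : z ∈ S
    · exact (hG hzS).trans (hgh ⟨hzS, hz⟩)
    · exact piecewise_eq_of_notMem S g h hzS
  refine ⟨S.piecewise g h, ?_, ?_⟩
  · obtain ⟨hS, hT⟩ | ⟨hS, hT⟩ := hST
    · exact (hg.congr hG).union_of_isOpen (hh.congr hH) hS hT
    · exact (hg.congr hG).union_of_isClosed (hh.congr hH) hS hT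
  · rintro z (hz | hz)
    · rw [hG hz, hgf z hz]
    · rw [hH hz, hhf z hz]

theorem hasContinuousLogOn_iUnion_of_isClosed {ι : Type*} [Finite ι] {f : X → ℂ}
    {C : ι → Set X} {g : ι → X → ℂ} (hC : ∀ i, IsClosed (C i))
    (hg : ∀ i, ContinuousOn (g i) (C i)) (hgf : ∀ i, ∀ z ∈ C i, exp (g i z) = f z)
    (hagree : ∀ i j, EqOn (g i) (g j) (C i ∩ C j)) : HasContinuousLogOn f (⋃ i, C i) := by
  classical
  let G : X → ℂ := fun z ↦ if h : ∃ i, z ∈ C i then g h.choose z else 0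
  have hG (i) : EqOn G (g i) (C i) := fun z hz ↦ by
    have h : ∃ i, z ∈ C i := ⟨i, hz⟩
    exact (dif_pos h).trans (hagree _ _ ⟨h.choose_spec, hz⟩)
  refine ⟨G, (locallyFinite_of_finite C).continuousOn_iUnion hC fun i ↦ (hg i).congr (hG i), ?_⟩
  rintro z hz
  obtain ⟨i, hi⟩ := mem_iUnion.1 hz
  rw [hG i hi, hgf i z hi]

end ContinuousLogarithms

section ComplementaryComponents

open Complex Set Topology Metric

section General

variable {X : Type*} [TopologicalSpace X] {K L : Set X}

theorem frontier_connectedComponentIn_compl_subset [LocallyConnectedSpace X] (hK : IsClosed K)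
    (x : X) : frontier (connectedComponentIn Kᶜ x) ⊆ K := by
  intro y hy
  by_contra hyK
  have hopen (z : X) : IsOpen (connectedComponentIn Kᶜ z) := hK.isOpen_compl.connectedComponentIn
  rw [(hopen x).frontier_eq] at hy
  obtain ⟨z, hzy, hzx⟩ := mem_closure_iff.1 hy.1 _ (hopen y) (mem_connectedComponentIn hyK)
  refine hy.2 ?_
  rw [connectedComponentIn_eq hzx, ← connectedComponentIn_eq hzy]
  exact mem_connectedComponentIn hyK

theorem joinedIn_compl_of_connectedComponentIn_eq [LocallyPathConnectedSpace X] (hK : IsClosed K)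
    {x y : X} (hx : x ∉ K) (hy : y ∉ K)
    (hxy : connectedComponentIn Kᶜ x = connectedComponentIn Kᶜ y) : JoinedIn Kᶜ x y := by
  have hpath : IsPathConnected (connectedComponentIn Kᶜ x) :=
    hK.isOpen_compl.connectedComponentIn.isConnected_iff_isPathConnected.1
      (isConnected_connectedComponentIn_iff.2 hx)
  exact (hpath.joinedIn x (mem_connectedComponentIn hx) y
    (hxy ▸ mem_connectedComponentIn hy)).mono (connectedComponentIn_subset _ _)

/-- The points `x i` lie in pairwise distinct components of the complement of `K`. -/
def IsSeparatedBy {ι : Type*} (K : Set X) (x : ι → X) : Prop :=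
  (∀ i, x i ∉ K) ∧ Function.Injective fun i ↦ connectedComponentIn Kᶜ (x i)

theorem isSeparatedBy_pair {x y : X} (hx : x ∉ K) (hy : y ∉ K)
    (hxy : connectedComponentIn Kᶜ x ≠ connectedComponentIn Kᶜ y) : IsSeparatedBy K ![x, y] := by
  refine ⟨Fin.forall_fin_two.2 ⟨hx, hy⟩, fun i j ↦ ?_⟩
  fin_cases i <;> fin_cases j <;> simp [hxy, hxy.symm]

theorem connectedComponentIn_compl_eq_of_subset (hKL : K ⊆ L) {x y : X} (hy : y ∉ L)
    (hxy : connectedComponentIn Lᶜ x = connectedComponentIn Lᶜ y) :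
    connectedComponentIn Kᶜ x = connectedComponentIn Kᶜ y :=
  connectedComponentIn_eq <| connectedComponentIn_mono _ (compl_subset_compl.2 hKL) <|
    hxy ▸ mem_connectedComponentIn hy

namespace IsSeparatedBy

variable {n : ℕ} {x : Fin n → X} {c p q : X}

theorem cons (hx : IsSeparatedBy K x) (hq : q ∉ K)
    (hqx : ∀ i, connectedComponentIn Kᶜ (x i) ≠ connectedComponentIn Kᶜ q) :
    IsSeparatedBy K (Fin.cons q x : Fin (n + 1) → X) := by
  refine ⟨Fin.cases hq hx.1, ?_⟩
  change Function.Injective (connectedComponentIn Kᶜ ∘ (Fin.cons q x : Fin (n + 1) → X))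
  rw [Fin.comp_cons, Fin.cons_injective_iff]
  exact ⟨fun ⟨i, hi⟩ ↦ hqx i hi, hx.2⟩

theorem notMem_of_diff_subset (hx : IsSeparatedBy K x)
    (hLK : L \ K ⊆ connectedComponentIn Kᶜ c) {i : Fin n}
    (hi : x i ∉ connectedComponentIn Kᶜ c) : x i ∉ L :=
  fun hL ↦ hi (hLK ⟨hL, hx.1 i⟩)

theorem connectedComponentIn_ne (hx : IsSeparatedBy K x) (hKL : K ⊆ L)
    (hLK : L \ K ⊆ connectedComponentIn Kᶜ c) (hp : p ∈ connectedComponentIn Kᶜ c) {i : Fin n}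
    (hi : x i ∉ connectedComponentIn Kᶜ c) :
    connectedComponentIn Lᶜ (x i) ≠ connectedComponentIn Lᶜ p := fun h ↦ hi <| by
  rw [connectedComponentIn_eq hp, connectedComponentIn_compl_eq_of_subset hKL
    (hx.notMem_of_diff_subset hLK hi) h.symm]
  exact mem_connectedComponentIn (hx.1 i)

open Classical in
theorem ite_mem (hx : IsSeparatedBy K x) (hKL : K ⊆ L) (hLK : L \ K ⊆ connectedComponentIn Kᶜ c)
    (hp : p ∈ connectedComponentIn Kᶜ c \ L) :
    IsSeparatedBy L fun i ↦ if x i ∈ connectedComponentIn Kᶜ c then p else x i := by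
  have hne (i) := hx.connectedComponentIn_ne hKL hLK hp.1 (i := i)
  refine ⟨fun i ↦ ?_, fun i j hij ↦
    hx.2 (?_ : connectedComponentIn Kᶜ (x i) = connectedComponentIn Kᶜ (x j))⟩
  · beta_reduce
    split_ifs with hi
    exacts [hp.2, hx.notMem_of_diff_subset hLK hi]
  · by_cases hi : x i ∈ connectedComponentIn Kᶜ c <;>
      by_cases hj : x j ∈ connectedComponentIn Kᶜ c <;>
      simp only [hi, hj, if_true, if_false] at hij
    · rw [← connectedComponentIn_eq hi, ← connectedComponentIn_eq hj]
    · exact absurd hij.symm (hne j hj)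
    · exact absurd hij (hne i hi)
    · exact connectedComponentIn_compl_eq_of_subset hKL (hx.notMem_of_diff_subset hLK hj) hij

/-- If enlarging `K` to `L` splits the component of `c`, at most one of the points `x i` is lost to
that component, and it can be replaced by two. -/
theorem exists_succ (hx : IsSeparatedBy K x) (hKL : K ⊆ L)
    (hLK : L \ K ⊆ connectedComponentIn Kᶜ c) (hp : p ∈ connectedComponentIn Kᶜ c \ L)
    (hq : q ∈ connectedComponentIn Kᶜ c \ L)
    (hpq : connectedComponentIn Lᶜ p ≠ connectedComponentIn Lᶜ q) :
    ∃ y : Fin (n + 1) → X, IsSeparatedBy L y := by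
  classical
  refine ⟨_, (hx.ite_mem hKL hLK hp).cons hq.2 fun i ↦ ?_⟩
  split_ifs with hi
  exacts [hpq, hx.connectedComponentIn_ne hKL hLK hq.1 hi]

end IsSeparatedBy

end General

theorem isPreconnected_compl_ball_zero (R : ℝ) : IsPreconnected (ball (0 : ℂ) R)ᶜ := by
  have hpolar : (ball (0 : ℂ) R)ᶜ =
      (fun y : ℝ × ℝ ↦ (y.1 : ℂ) * exp (y.2 * I)) '' (Ici (max R 0) ×ˢ univ) := by
    ext z
    constructor
    · exact fun hz ↦ ⟨(‖z‖, arg z), ⟨by simpa using hz, mem_univ _⟩, norm_mul_exp_arg_mul_I z⟩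
    · rintro ⟨⟨r, t⟩, ⟨hr, -⟩, rfl⟩
      simp only [mem_Ici, max_le_iff] at hr
      simp [norm_exp_ofReal_mul_I, abs_of_nonneg hr.2, hr.1]
  rw [hpolar]
  exact (isPreconnected_Ici.prod isPreconnected_univ).image _ (by fun_prop)

theorem connectedComponentIn_compl_eq_of_not_isBounded {K : Set ℂ} (hK : Bornology.IsBounded K)
    {p q : ℂ} (hp : ¬ Bornology.IsBounded (connectedComponentIn Kᶜ p))
    (hq : ¬ Bornology.IsBounded (connectedComponentIn Kᶜ q)) :
    connectedComponentIn Kᶜ p = connectedComponentIn Kᶜ q := by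
  obtain ⟨R, hR⟩ := hK.subset_ball 0
  have hsub {x : ℂ} (hx : ¬ Bornology.IsBounded (connectedComponentIn Kᶜ x)) :
      (ball (0 : ℂ) R)ᶜ ⊆ connectedComponentIn Kᶜ x := by
    obtain ⟨y, hy, hyR⟩ := not_subset.1 fun h ↦ hx (isBounded_ball.subset h)
    rw [connectedComponentIn_eq hy]
    exact (isPreconnected_compl_ball_zero R).subset_connectedComponentIn hyR
      (compl_subset_compl.2 hR)
  have hmem : ((|R| : ℝ) : ℂ) ∈ (ball (0 : ℂ) R)ᶜ := by simp [le_abs_self]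
  rw [connectedComponentIn_eq (hsub hp hmem), connectedComponentIn_eq (hsub hq hmem)]

section Eilenberg

variable {ι : Type*} [Fintype ι] {K : Set ℂ} {x : ι → ℂ} {n : ι → ℤ}

theorem IsSeparatedBy.eq_zero_of_isBounded (hx : IsSeparatedBy K x) (hK : IsClosed K)
    (hlog : HasContinuousLogOn (fun z ↦ ∏ i, (z - x i) ^ n i) K) {i : ι}
    (hb : Bornology.IsBounded (connectedComponentIn Kᶜ (x i))) : n i = 0 := by
  classical
  have hfrontier := frontier_connectedComponentIn_compl_subset hK (x i)
  have hne : ∀ j ∈ Finset.univ.erase i, ∀ z ∈ closure (connectedComponentIn Kᶜ (x i)),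
      z - x j ≠ 0 := by
    intro j hj z hz
    refine sub_ne_zero.2 ?_
    rintro rfl
    rw [closure_eq_self_union_frontier] at hz
    rcases hz with hz | hz
    · exact Finset.ne_of_mem_erase hj (hx.2 (connectedComponentIn_eq hz)).symm
    · exact hx.1 j (hfrontier hz)
  refine eq_zero_of_hasContinuousLogOn_frontier hK.isOpen_compl.connectedComponentIn hb
    (mem_connectedComponentIn (hx.1 i))
    (h := fun z ↦ ∏ j ∈ Finset.univ.erase i, (z - x j) ^ n j) ?_ ?_ ?_
  · exact continuousOn_finsetProd _ fun j hj ↦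
      ContinuousOn.zpow₀ (by fun_prop) (n j) fun z hz ↦ Or.inl (hne j hj z hz)
  · exact fun z hz ↦ Finset.prod_ne_zero_iff.2 fun j hj ↦ zpow_ne_zero _ (hne j hj z hz)
  · exact (hlog.mono hfrontier).congr fun z _ ↦
      (Finset.mul_prod_erase _ (fun j ↦ (z - x j) ^ n j) (Finset.mem_univ i)).symm

/-- Eilenberg's criterion: at most one of the components is unbounded, and the exponent there is
determined by the others. -/
theorem IsSeparatedBy.eq_zero_of_sum_eq_zero (hx : IsSeparatedBy K x) (hK : IsCompact K)
    (hlog : HasContinuousLogOn (fun z ↦ ∏ i, (z - x i) ^ n i) K) (hsum : ∑ i, n i = 0) :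
    n = 0 := by
  funext i
  by_contra hi
  have hunbounded {j} (hj : n j ≠ 0) :
      ¬ Bornology.IsBounded (connectedComponentIn Kᶜ (x j)) :=
    mt (hx.eq_zero_of_isBounded hK.isClosed hlog) hj
  have hother (j) (hj : j ≠ i) : n j = 0 := by
    by_contra hnj
    exact hj <| hx.2 <| connectedComponentIn_compl_eq_of_not_isBounded hK.isBounded
      (hunbounded hnj) (hunbounded hi)
  rw [Fintype.sum_eq_single i hother] at hsum
  exact hi hsum

end Eilenberg

theorem connectedComponentIn_compl_eq_of_hasContinuousLogOn {K : Set ℂ} (hK : IsCompact K)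
    {p q : ℂ} (hp : p ∉ K) (hq : q ∉ K)
    (hlog : HasContinuousLogOn (fun z ↦ (z - p) / (z - q)) K) :
    connectedComponentIn Kᶜ p = connectedComponentIn Kᶜ q := by
  by_contra hpq
  have hzero := (isSeparatedBy_pair hp hq hpq).eq_zero_of_sum_eq_zero (n := ![1, -1]) hK
    (hlog.congr fun z _ ↦ by simp [div_eq_mul_inv]) (by simp)
  simpa using congrFun hzero 0

theorem AdmitsContinuousLogs.connectedComponentIn_compl_eq {K : Set ℂ}
    (h : AdmitsContinuousLogs K) (hK : IsCompact K) {p q : ℂ} (hp : p ∉ K) (hq : q ∉ K) :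
    connectedComponentIn Kᶜ p = connectedComponentIn Kᶜ q := by
  have hsub {x z : ℂ} (hx : x ∉ K) (hz : z ∈ K) : z - x ≠ 0 :=
    sub_ne_zero.2 (ne_of_mem_of_not_mem hz hx)
  exact connectedComponentIn_compl_eq_of_hasContinuousLogOn hK hp hq <|
    h _ (ContinuousOn.div (by fun_prop) (by fun_prop) fun z hz ↦ hsub hq hz)
      fun z hz ↦ div_ne_zero (hsub hp hz) (hsub hq hz)

end ComplementaryComponents

section AddingAnArc

open Complex Set Topology

theorem prod_zpow_eq_zpow_sum₀ {ι G₀ : Type*} [CommGroupWithZero G₀] {x : G₀} (hx : x ≠ 0)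
    (s : Finset ι) (n : ι → ℤ) : ∏ i ∈ s, x ^ n i = x ^ ∑ i ∈ s, n i := by
  classical
  induction s using Finset.induction_on with
  | empty => simp
  | insert i s hi ih => rw [Finset.prod_insert hi, Finset.sum_insert hi, zpow_add₀ hx, ih]

section Monodromy

variable {X : Type*} [TopologicalSpace X] {f : X → ℂ} {K A : Set X} {a b : X}

/-- `f` has logarithms on `K` and on `A` whose difference increases by `m * 2πi` from `a` to `b`.
The class `m` is the image of `f` under the connecting map of Mayer–Vietoris for `K ∪ A`. -/
def HasLogMonodromy (f : X → ℂ) (K A : Set X) (a b : X) (m : ℤ) : Prop :=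
  ∃ g h : X → ℂ, ContinuousOn g K ∧ ContinuousOn h A ∧ (∀ z ∈ K, exp (g z) = f z) ∧
    (∀ z ∈ A, exp (h z) = f z) ∧ (g b - h b) - (g a - h a) = m * (2 * Real.pi * I)

theorem exists_hasLogMonodromy (hK : HasContinuousLogOn f K) (hA : HasContinuousLogOn f A)
    (ha : a ∈ K ∩ A) (hb : b ∈ K ∩ A) : ∃ m : ℤ, HasLogMonodromy f K A a b m := by
  obtain ⟨g, hg, hgf⟩ := hK
  obtain ⟨h, hh, hhf⟩ := hA
  obtain ⟨m, hm⟩ := exists_sub_eq_int_mul_two_pi_mul_I ((hgf a ha.1).trans (hhf a ha.2).symm)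
  obtain ⟨n, hn⟩ := exists_sub_eq_int_mul_two_pi_mul_I ((hgf b hb.1).trans (hhf b hb.2).symm)
  exact ⟨n - m, g, h, hg, hh, hgf, hhf, by rw [hm, hn]; push_cast; ring⟩

namespace HasLogMonodromy

theorem prod_zpow {ι : Type*} [Fintype ι] {f : ι → X → ℂ} {m : ι → ℤ}
    (hf : ∀ i, HasLogMonodromy (f i) K A a b (m i)) (n : ι → ℤ) :
    HasLogMonodromy (fun z ↦ ∏ i, f i z ^ n i) K A a b (∑ i, n i * m i) := by
  choose g h hg hh hgf hhf hm using hf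
  refine ⟨fun z ↦ ∑ i, n i * g i z, fun z ↦ ∑ i, n i * h i z,
    continuousOn_finsetSum _ fun i _ ↦ continuousOn_const.mul (hg i),
    continuousOn_finsetSum _ fun i _ ↦ continuousOn_const.mul (hh i),
    fun z hz ↦ by simp [exp_sum, exp_int_mul, hgf _ z hz],
    fun z hz ↦ by simp [exp_sum, exp_int_mul, hhf _ z hz], ?_⟩
  simp only [← Finset.sum_sub_distrib, Int.cast_sum, Int.cast_mul, Finset.sum_mul]
  refine Finset.sum_congr rfl fun i _ ↦ ?_
  rw [mul_assoc, ← hm i]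
  ring

theorem hasContinuousLogOn_union (hf : HasLogMonodromy f K A a b 0) (hK : IsClosed K)
    (hA : IsClosed A) (ha : a ∈ K ∩ A) (hKA : K ∩ A ⊆ {a, b}) :
    HasContinuousLogOn f (K ∪ A) := by
  obtain ⟨g, h, hg, hh, hgf, hhf, hm⟩ := hf
  have hexp : exp (g a - h a) = 1 := by
    rw [exp_sub, hgf a ha.1, ← hhf a ha.2, div_self (exp_ne_zero _)]
  refine _root_.hasContinuousLogOn_union (h := fun z ↦ h z + (g a - h a)) (Or.inr ⟨hK, hA⟩) hg
    (hh.add continuousOn_const) hgf (fun z hz ↦ by rw [exp_add, hexp, mul_one, hhf z hz]) ?_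
  intro z hz
  obtain rfl | rfl := hKA hz
  · ring
  · linear_combination hm

end HasLogMonodromy

end Monodromy

section Split

variable {K A : Set ℂ} {a b : ℂ}

/-- The degree and the monodromy are two linear conditions on exponents `n`, and together they
force `∏ i, (z - x i) ^ n i` to have a logarithm on `K ∪ A`. -/
theorem IsSeparatedBy.card_le_two {ι : Type*} [Fintype ι] {x : ι → ℂ}
    (hx : IsSeparatedBy (K ∪ A) x) (hK : IsCompact K) (hA : IsCompact A)
    (hlogs : AdmitsContinuousLogs A) (ha : a ∈ K ∩ A) (hb : b ∈ K ∩ A) (hKA : K ∩ A ⊆ {a, b})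
    (hsame : ∀ i j, connectedComponentIn Kᶜ (x i) = connectedComponentIn Kᶜ (x j)) :
    Fintype.card ι ≤ 2 := by
  by_contra! hcard
  obtain ⟨i₀⟩ : Nonempty ι := Fintype.card_pos_iff.1 (by lia)
  have hsub (i) {z} (hz : z ∈ K ∪ A) : z - x i ≠ 0 :=
    sub_ne_zero.2 (ne_of_mem_of_not_mem hz (hx.1 i))
  have hmonodromy (i) : ∃ m, HasLogMonodromy (fun z ↦ (z - x i) / (z - x i₀)) K A a b m := by
    refine exists_hasLogMonodromy (hasContinuousLogOn_sub_div_sub_of_joinedIn ?_) (hlogs _ ?_ ?_)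
      ha hb
    · exact joinedIn_compl_of_connectedComponentIn_eq hK.isClosed
        (fun h ↦ hx.1 _ (Or.inl h)) (fun h ↦ hx.1 _ (Or.inl h)) (hsame i₀ i)
    · exact ContinuousOn.div (by fun_prop) (by fun_prop) fun z hz ↦ hsub i₀ (Or.inr hz)
    · exact fun z hz ↦ div_ne_zero (hsub i (Or.inr hz)) (hsub i₀ (Or.inr hz))
  choose m hm using hmonodromy
  let φ : (ι → ℤ) →ₗ[ℤ] ℤ × ℤ :=
    (Fintype.linearCombination ℤ fun _ ↦ (1 : ℤ)).prod (Fintype.linearCombination ℤ m)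
  have hφ : ¬ Function.Injective φ := fun h ↦
    hcard.not_ge (by simpa using LinearMap.finrank_le_finrank_of_injective h)
  obtain ⟨n, hn, hn0⟩ : ∃ n, φ n = 0 ∧ n ≠ 0 := by
    simpa [injective_iff_map_eq_zero] using hφ
  obtain ⟨hsum, hsum_m⟩ : ∑ i, n i = 0 ∧ ∑ i, n i * m i = 0 := by
    simpa [φ, Fintype.linearCombination_apply] using hn
  have hlog := HasLogMonodromy.prod_zpow hm n
  rw [hsum_m] at hlog
  refine hn0 (hx.eq_zero_of_sum_eq_zero (hK.union hA) ?_ hsum)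
  refine (hlog.hasContinuousLogOn_union hK.isClosed hA.isClosed ha hKA).congr fun z hz ↦ ?_
  have hconst : ∏ i, (z - x i₀) ^ n i = 1 := by
    rw [prod_zpow_eq_zpow_sum₀ (hsub i₀ hz), hsum, zpow_zero]
  simp [div_zpow, hconst]

theorem exists_exp_eq_one_eqOn_add_const {X : Type*} [TopologicalSpace X] {g h : X → ℂ}
    {C : Set X} (hC : IsPreconnected C) (hg : ContinuousOn g C) (hh : ContinuousOn h C)
    (hgh : ∀ z ∈ C, exp (g z) = exp (h z)) : ∃ c, exp c = 1 ∧ ∀ z ∈ C, g z = h z + c := by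
  obtain rfl | ⟨x, hx⟩ := C.eq_empty_or_nonempty
  · exact ⟨0, by simp⟩
  have hexp (z) (hz : z ∈ C) : exp (g z - h z) = 1 := by
    rw [exp_sub, hgh z hz, div_self (exp_ne_zero _)]
  refine ⟨g x - h x, hexp x hx, fun z hz ↦ ?_⟩
  have hconst : g z - h z = g x - h x := isCoveringMap_exp.constOn_of_comp hC (hg.sub hh)
    (fun s hs t ht ↦ Subtype.ext ((hexp s hs).trans (hexp t ht).symm)) hz hx
  rw [← hconst, add_sub_cancel]

/-- Otherwise the logarithms of `(z - a) / (z - b)` on the complements of `K` and of `A` could be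
glued to one on the complement of `{a, b}`. -/
theorem exists_connectedComponentIn_ne (hA : IsClosed A) (hab : a ≠ b)
    (hjK : JoinedIn K b a) (hjA : JoinedIn A b a) {U : Set ℂ} (hU : IsOpen U) (hUK : U ⊆ Kᶜ)
    (hAU : A ⊆ U ∪ {a, b}) :
    ∃ p ∈ U \ A, ∃ q ∈ U \ A,
      connectedComponentIn (K ∪ A)ᶜ p ≠ connectedComponentIn (K ∪ A)ᶜ q := by
  by_contra! hall
  rw [← compl_compl K] at hjK
  rw [← compl_compl A] at hjA
  obtain ⟨g, hg, hgf⟩ := hasContinuousLogOn_sub_div_sub_of_joinedIn hjK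
  obtain ⟨h, hh, hhf⟩ := hasContinuousLogOn_sub_div_sub_of_joinedIn hjA
  have hUA : U \ A ⊆ (K ∪ A)ᶜ := fun z hz hKA ↦ hKA.elim (hUK hz.1) hz.2
  obtain ⟨C, hC, hUC, hCKA⟩ : ∃ C, IsPreconnected C ∧ U \ A ⊆ C ∧ C ⊆ (K ∪ A)ᶜ := by
    obtain hempty | ⟨p, hp⟩ := (U \ A).eq_empty_or_nonempty
    · exact ⟨∅, isPreconnected_empty, hempty.subset, empty_subset _⟩
    · exact ⟨_, isPreconnected_connectedComponentIn,
        fun z hz ↦ hall z hz p hp ▸ mem_connectedComponentIn (hUA hz),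
        connectedComponentIn_subset _ _⟩
  have hCK : C ⊆ Kᶜ := hCKA.trans (compl_subset_compl.2 subset_union_left)
  have hCA : C ⊆ Aᶜ := hCKA.trans (compl_subset_compl.2 subset_union_right)
  obtain ⟨c, hc, hhg⟩ := exists_exp_eq_one_eqOn_add_const hC (hh.mono hCA) (hg.mono hCK)
    fun z hz ↦ (hhf z (hCA hz)).trans (hgf z (hCK hz)).symm
  have hlog := hasContinuousLogOn_union (g := fun z ↦ g z + c) (Or.inl ⟨hU, hA.isOpen_compl⟩)
    ((hg.mono hUK).add continuousOn_const) hh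
    (fun z hz ↦ by rw [exp_add, hc, mul_one, hgf z (hUK hz)]) hhf fun z hz ↦ (hhg z (hUC hz)).symm
  refine not_hasContinuousLogOn_sub_div_sub hab (hlog.mono fun z hz ↦ ?_)
  by_cases hzA : z ∈ A
  · exact Or.inl ((hAU hzA).resolve_right hz)
  · exact Or.inr hzA

end Split

end AddingAnArc

section Forests

variable {V A : Type*} [Finite V] [AddCommGroup A] {G : SimpleGraph V}

theorem exists_potential_of_isAcyclic (hG : G.IsAcyclic) {ω : V → V → A}
    (hω : ∀ u v, ω v u = -ω u v) : ∃ φ : V → A, ∀ u v, G.Adj u v → φ v - φ u = ω u v := by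
  classical
  induction G using WellFoundedLT.induction with
  | ind G ih =>
  obtain rfl | hne := eq_or_ne G ⊥
  · exact ⟨0, by simp⟩
  obtain ⟨a, b, hab⟩ := ne_bot_iff_exists_adj.1 hne
  let G' := G.deleteEdges {s(a, b)}
  have hlt : G' < G := (G.deleteEdges_le _).lt_of_ne (by simpa using hab)
  obtain ⟨φ, hφ⟩ := ih G' hlt (hG.anti hlt.le)
  have hbridge : ¬ G'.Reachable a b := isBridge_iff.1 (isAcyclic_iff_forall_isBridge.1 hG hab)
  refine ⟨fun w ↦ φ w + if G'.Reachable b w then ω a b - (φ b - φ a) else 0, fun u v huv ↦ ?_⟩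
  by_cases huv' : G'.Adj u v
  · have hiff : G'.Reachable b u ↔ G'.Reachable b v :=
      ⟨(·.trans huv'.reachable), (·.trans huv'.symm.reachable)⟩
    simp [hiff, hφ u v huv']
  · have heq : s(u, v) = s(a, b) := by
      by_contra h
      exact huv' (deleteEdges_adj.2 ⟨huv, h⟩)
    have hba : ¬ G'.Reachable b a := fun h ↦ hbridge h.symm
    obtain ⟨rfl, rfl⟩ | ⟨rfl, rfl⟩ := Sym2.eq_iff.1 heq
    · simp only [hba, Reachable.refl, if_true, if_false]
      abel
    · simp only [hba, Reachable.refl, if_true, if_false, hω u v]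
      abel

theorem exists_add_const_eq_of_isAcyclic (hG : G.IsAcyclic) (n : G.edgeSet → V → A) :
    ∃ (φ : V → A) (c : G.edgeSet → A), ∀ e : G.edgeSet, ∀ v ∈ (e : Sym2 V), n e v + c e = φ v := by
  let m : Sym2 V → V → A := Function.extend Subtype.val n 0
  have hm (e : G.edgeSet) : m e = n e := Subtype.val_injective.extend_apply n 0 e
  obtain ⟨φ, hφ⟩ := exists_potential_of_isAcyclic hG
    (ω := fun u v ↦ m s(u, v) v - m s(u, v) u) fun u v ↦ by rw [Sym2.eq_swap, neg_sub]
  have hconst (e : G.edgeSet) : ∃ c, ∀ v ∈ (e : Sym2 V), n e v + c = φ v := by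
    obtain ⟨e, he⟩ := e
    induction e with | _ u v
    have huv := hφ u v he
    rw [hm ⟨s(u, v), he⟩] at huv
    refine ⟨φ u - n ⟨s(u, v), he⟩ u, fun w hw ↦ ?_⟩
    obtain rfl | rfl := Sym2.mem_iff.1 hw
    · exact add_sub_cancel _ _
    · rw [← sub_eq_zero, ← sub_eq_zero.2 huv.symm]
      abel
  choose c hc using hconst
  exact ⟨φ, c, hc⟩

end Forests

namespace PlaneEmbedding

section Drawings

open Complex Set Topology

variable {V W : Type*} {G : SimpleGraph V} {H : SimpleGraph W} (E : PlaneEmbedding G)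

/-- The drawing induced on a graph `H` that is contained in the drawn graph. -/
def comap (f : Copy H G) : PlaneEmbedding H where
  pos := E.pos ∘ f
  inj := E.inj.comp f.injective
  arc e := E.arc (f.mapEdgeSet e)
  arc_cont e := E.arc_cont _
  arc_inj e := E.arc_inj _
  arc_ends := by
    rintro ⟨e, he⟩
    obtain ⟨x, y, hxy, h0, h1⟩ := E.arc_ends (f.mapEdgeSet ⟨e, he⟩)
    induction e with | _ u v
    obtain ⟨rfl, rfl⟩ | ⟨rfl, rfl⟩ := Sym2.eq_iff.1 hxy
    · exact ⟨u, v, rfl, h0, h1⟩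
    · exact ⟨v, u, Sym2.eq_swap, h0, h1⟩
  arc_avoid e t ht h := E.arc_avoid _ t ht (range_comp_subset_range _ _ h)
  arc_disjoint e e' h := E.arc_disjoint _ _ (f.mapEdgeSet.injective.ne h)

/-- The point of the complex plane representing `v`. -/
noncomputable def point (v : V) : ℂ := equivRealProdCLM.symm (E.pos v)

/-- The arc representing `e`, as a parametrised curve in the complex plane. -/
noncomputable def path (e : G.edgeSet) (t : ℝ) : ℂ := equivRealProdCLM.symm (E.arc e t)

/-- The set of points on the arc representing `e`, including its two endpoints. -/
def curve (e : G.edgeSet) : Set ℂ := E.path e '' Icc 0 1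

/-- The set of points on the arc representing `e`, without its two endpoints. -/
def openCurve (e : G.edgeSet) : Set ℂ := E.path e '' Ioo 0 1

/-- The set of points covered by the drawing. -/
def carrier : Set ℂ := range E.point ∪ ⋃ e, E.curve e

variable {E} {e e' : G.edgeSet} {u v : V} {z : ℂ}

theorem point_injective : Function.Injective E.point :=
  equivRealProdCLM.symm.injective.comp E.inj

theorem continuousOn_path : ContinuousOn (E.path e) (Icc 0 1) :=
  equivRealProdCLM.symm.continuous.comp_continuousOn (E.arc_cont e)

theorem injOn_path : InjOn (E.path e) (Icc 0 1) :=
  equivRealProdCLM.symm.injective.comp_injOn (E.arc_inj e)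

theorem isCompact_curve : IsCompact (E.curve e) :=
  isCompact_Icc.image_of_continuousOn continuousOn_path

theorem isPathConnected_curve : IsPathConnected (E.curve e) :=
  ((convex_Icc (0 : ℝ) 1).isPathConnected (nonempty_Icc.2 zero_le_one)).image' continuousOn_path

theorem isPreconnected_openCurve : IsPreconnected (E.openCurve e) :=
  isPreconnected_Ioo.image _ (continuousOn_path.mono Ioo_subset_Icc_self)

theorem admitsContinuousLogs_curve : AdmitsContinuousLogs (E.curve e) :=
  admitsContinuousLogs_image_Icc zero_le_one continuousOn_path injOn_path

theorem curve_eq_union (he : (e : Sym2 V) = s(u, v)) :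
    E.curve e = E.openCurve e ∪ {E.point u, E.point v} := by
  have hends : E.curve e = E.openCurve e ∪ {E.path e 0, E.path e 1} := by
    rw [curve, ← Ioo_union_both zero_le_one, image_union, image_pair, openCurve]
  obtain ⟨x, y, hxy, h0, h1⟩ := E.arc_ends e
  rw [hends, path, path, h0, h1, ← point, ← point]
  obtain ⟨rfl, rfl⟩ | ⟨rfl, rfl⟩ := Sym2.eq_iff.1 (hxy.symm.trans he)
  · rfl
  · rw [pair_comm]

theorem point_notMem_openCurve : E.point v ∉ E.openCurve e := by
  rintro ⟨t, ht, htv⟩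
  exact E.arc_avoid e t ht ⟨v, (equivRealProdCLM.symm.injective htv).symm⟩

theorem disjoint_openCurve (h : e ≠ e') : Disjoint (E.openCurve e) (E.openCurve e') := by
  rw [Set.disjoint_left]
  rintro _ ⟨s, hs, rfl⟩ ⟨t, ht, hst⟩
  exact E.arc_disjoint e e' h s hs t ht (equivRealProdCLM.symm.injective hst.symm)

theorem point_mem_curve : E.point v ∈ E.curve e ↔ v ∈ (e : Sym2 V) := by
  obtain ⟨⟨x, y⟩, hxy⟩ := Sym2.mk_surjective (e : Sym2 V)
  simp [curve_eq_union hxy.symm, point_notMem_openCurve, point_injective.eq_iff, ← hxy]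

theorem curve_subset_union_range : E.curve e ⊆ E.openCurve e ∪ range E.point := by
  obtain ⟨⟨x, y⟩, hxy⟩ := Sym2.mk_surjective (e : Sym2 V)
  rw [curve_eq_union hxy.symm]
  exact union_subset_union_right _ (pair_subset (mem_range_self x) (mem_range_self y))

theorem openCurve_subset_curve : E.openCurve e ⊆ E.curve e := image_mono Ioo_subset_Icc_self

theorem curve_inter_curve_subset (h : e ≠ e') : E.curve e ∩ E.curve e' ⊆ range E.point := by
  rintro z ⟨hz, hz'⟩
  by_contra hpoint
  exact Set.disjoint_left.1 (disjoint_openCurve h)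
    ((curve_subset_union_range hz).resolve_right hpoint)
    ((curve_subset_union_range hz').resolve_right hpoint)

theorem point_mem_carrier : E.point v ∈ E.carrier := Or.inl (mem_range_self v)

theorem curve_subset_carrier : E.curve e ⊆ E.carrier :=
  (subset_iUnion E.curve e).trans subset_union_right

theorem isCompact_carrier [Finite V] : IsCompact E.carrier :=
  (finite_range _).isCompact.union (isCompact_iUnion fun _ ↦ isCompact_curve)

theorem joinedIn_carrier (h : G.Reachable u v) : JoinedIn E.carrier (E.point u) (E.point v) := by
  obtain ⟨w⟩ := h
  induction w with
  | nil => exact JoinedIn.refl point_mem_carrier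
  | @cons a b _ hab _ ih =>
    have hcurve : JoinedIn (E.curve ⟨s(a, b), hab⟩) (E.point a) (E.point b) :=
      isPathConnected_curve.joinedIn _ (point_mem_curve.2 (Sym2.mem_mk_left a b)) _
        (point_mem_curve.2 (Sym2.mem_mk_right a b))
    exact (hcurve.mono curve_subset_carrier).trans ih

section Forest

variable [Finite V]

/-- Logarithms on the edges agree with logarithms at the vertices up to integer multiples of
`2πi`, and on a forest these integers can be made to vanish by shifting the logarithms. -/
theorem exists_logs_eq_at_points (hG : G.IsAcyclic) {f : ℂ → ℂ} (hf : ContinuousOn f E.carrier)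
    (hf0 : ∀ z ∈ E.carrier, f z ≠ 0) :
    ∃ (l : V → ℂ) (L : G.edgeSet → ℂ → ℂ), (∀ v, exp (l v) = f (E.point v)) ∧
      (∀ e, ContinuousOn (L e) (E.curve e)) ∧ (∀ e, ∀ z ∈ E.curve e, exp (L e z) = f z) ∧
      ∀ e : G.edgeSet, ∀ v ∈ (e : Sym2 V), L e (E.point v) = l v := by
  have hlog (e) : HasContinuousLogOn f (E.curve e) :=
    admitsContinuousLogs_curve f (hf.mono curve_subset_carrier)
      fun z hz ↦ hf0 z (curve_subset_carrier hz)
  choose L hL hLf using hlog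
  have hl (v) : exp (log (f (E.point v))) = f (E.point v) := exp_log (hf0 _ point_mem_carrier)
  have hdiff (e : G.edgeSet) (v) : ∃ n : ℤ, v ∈ (e : Sym2 V) →
      L e (E.point v) - log (f (E.point v)) = n * (2 * Real.pi * I) := by
    by_cases hv : v ∈ (e : Sym2 V)
    · simpa [hv] using exists_sub_eq_int_mul_two_pi_mul_I
        ((hLf e _ (point_mem_curve.2 hv)).trans (hl v).symm)
    · exact ⟨0, fun h ↦ absurd h hv⟩
  choose n hn using hdiff
  obtain ⟨φ, c, hφ⟩ := exists_add_const_eq_of_isAcyclic hG n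
  refine ⟨fun v ↦ log (f (E.point v)) + φ v * (2 * Real.pi * I),
    fun e z ↦ L e z + c e * (2 * Real.pi * I), fun v ↦ ?_,
    fun e ↦ (hL e).add continuousOn_const, fun e z hz ↦ ?_, fun e v hv ↦ ?_⟩
  · rw [exp_add, hl, exp_int_mul_two_pi_mul_I, mul_one]
  · rw [exp_add, hLf e z hz, exp_int_mul_two_pi_mul_I, mul_one]
  · have hφ' : (n e v + c e : ℂ) = φ v := mod_cast hφ e v hv
    linear_combination hn e v hv + 2 * Real.pi * I * hφ'

theorem admitsContinuousLogs_carrier (hG : G.IsAcyclic) : AdmitsContinuousLogs E.carrier := by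
  intro f hf hf0
  obtain ⟨l, L, hl, hL, hLf, hLl⟩ := exists_logs_eq_at_points hG hf hf0
  let C : V ⊕ G.edgeSet → Set ℂ := Sum.elim (fun v ↦ {E.point v}) E.curve
  let g : V ⊕ G.edgeSet → ℂ → ℂ := Sum.elim (fun v _ ↦ l v) L
  have hcarrier : E.carrier = ⋃ i, C i := by
    rw [iUnion_sum, carrier, ← iUnion_singleton_eq_range]
    rfl
  have hval (i v) (hv : E.point v ∈ C i) : g i (E.point v) = l v := by
    rcases i with w | e
    · exact congrArg l (point_injective (mem_singleton_iff.1 hv)).symm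
    · exact hLl e v (point_mem_curve.1 hv)
  have hinter {i j} (hij : i ≠ j) : C i ∩ C j ⊆ range E.point := by
    rcases i with v | e
    · exact inter_subset_left.trans (singleton_subset_iff.2 (mem_range_self v))
    rcases j with v | e'
    · exact inter_subset_right.trans (singleton_subset_iff.2 (mem_range_self v))
    · exact curve_inter_curve_subset fun h ↦ hij (congrArg _ h)
  rw [hcarrier]
  refine hasContinuousLogOn_iUnion_of_isClosed (g := g) ?_ ?_ ?_ fun i j z hz ↦ ?_
  · exact Sum.rec (fun v ↦ isClosed_singleton) fun e ↦ isCompact_curve.isClosed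
  · exact Sum.rec (fun v ↦ continuousOn_const) hL
  · exact Sum.rec (fun v z hz ↦ mem_singleton_iff.1 hz ▸ hl v) hLf
  · obtain rfl | hij := eq_or_ne i j
    · rfl
    · obtain ⟨v, rfl⟩ := hinter hij hz
      rw [hval i v hz.1, hval j v hz.2]

end Forest

end Drawings

end PlaneEmbedding

section Cycles

variable {V : Type*} {G : SimpleGraph V}

theorem exists_edge_not_isBridge (hG : ¬ G.IsAcyclic) : ∃ e : G.edgeSet, ¬ G.IsBridge e := by
  rw [isAcyclic_iff_forall_isBridge] at hG
  push Not at hG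
  simpa using hG

variable [Finite V]

theorem ncard_edgeSet_lt_of_isAcyclic [Nonempty V] (hG : G.IsAcyclic) :
    G.edgeSet.ncard < Nat.card V := by
  obtain ⟨T, hGT, hT⟩ := exists_maximal_isAcyclic_of_le_isAcyclic (le_top (a := G)) hG
  have htree : T.IsTree := maximal_isAcyclic_iff_isTree.1 (by simpa using hT)
  calc G.edgeSet.ncard ≤ T.edgeSet.ncard := Set.ncard_le_ncard (edgeSet_mono hGT)
    _ < Nat.card V := by
      classical
      have := Fintype.ofFinite V
      rw [Nat.card_eq_fintype_card, ← htree.card_edgeFinset, ← coe_edgeFinset,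
        Set.ncard_coe_finset]
      exact Nat.lt_succ_self _

theorem le_ncard_edgeSet_of_le_egirth (hG : ¬ G.IsAcyclic) {g : ℕ} (hg : g ≤ G.egirth) :
    g ≤ G.edgeSet.ncard := by
  classical
  obtain ⟨v, w, hw⟩ : ∃ (v : V) (w : G.Walk v v), w.IsCycle := by
    simpa [IsAcyclic] using hG
  calc g ≤ w.length := mod_cast le_egirth.1 hg v w hw
    _ = w.edges.toFinset.card := by
      rw [List.toFinset_card_of_nodup hw.edges_nodup, w.length_edges]
    _ ≤ G.edgeSet.ncard := by
      rw [← Set.ncard_coe_finset]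
      exact Set.ncard_le_ncard fun e he ↦ w.edges_subset_edgeSet (List.mem_toFinset.1 he)

end Cycles

namespace PlaneEmbedding

section Euler

open Set Topology

variable {V : Type*} {G H : SimpleGraph V} (E : PlaneEmbedding G)

/-- The part of the drawing that represents a subgraph `H` on the same vertices. -/
def restrict (h : H ≤ G) : PlaneEmbedding H := E.comap (Copy.ofLE H G h)

/-- The drawing with the arc representing `e` erased. -/
def deleteEdge (e : G.edgeSet) : PlaneEmbedding (G.deleteEdges {(e : Sym2 V)}) :=
  E.restrict (G.deleteEdges_le _)

/-- The graph formed by the edges whose open arcs meet the closure of the face containing `p`. -/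
def boundary (p : ℂ) : SimpleGraph V :=
  fromEdgeSet ((↑) '' {e | (closure (connectedComponentIn E.carrierᶜ p) ∩ E.openCurve e).Nonempty})

variable {E} {e : G.edgeSet} {u v : V} {p q : ℂ}

theorem curve_restrict (h : H ≤ G) (e : H.edgeSet) :
    (E.restrict h).curve e = E.curve ⟨e, edgeSet_mono h e.2⟩ :=
  congrArg E.curve <| Subtype.ext <| congrFun Sym2.map_id (e : Sym2 V)

theorem carrier_restrict_subset (h : H ≤ G) : (E.restrict h).carrier ⊆ E.carrier :=
  union_subset_union_right _ <| iUnion_subset fun e ↦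
    (curve_restrict h e).trans_subset (subset_iUnion E.curve _)

theorem curve_subset_carrier_restrict (h : H ≤ G) (he : (e : Sym2 V) ∈ H.edgeSet) :
    E.curve e ⊆ (E.restrict h).carrier :=
  (curve_restrict h ⟨e, he⟩).symm.trans_subset curve_subset_carrier

theorem carrier_deleteEdge_union_curve : (E.deleteEdge e).carrier ∪ E.curve e = E.carrier := by
  refine (union_subset (carrier_restrict_subset _) curve_subset_carrier).antisymm ?_
  refine union_subset (fun z hz ↦ Or.inl (Or.inl hz)) (iUnion_subset fun e' ↦ ?_)
  obtain rfl | hne := eq_or_ne e' e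
  · exact subset_union_right
  · refine (curve_subset_carrier_restrict _ ?_).trans subset_union_left
    rw [edgeSet_deleteEdges]
    exact ⟨e'.2, fun h ↦ hne (Subtype.ext h)⟩

theorem openCurve_subset_compl_carrier_deleteEdge :
    E.openCurve e ⊆ (E.deleteEdge e).carrierᶜ := by
  have hpoint {z} (hz : z ∈ E.openCurve e) : z ∉ range E.point := by
    rintro ⟨v, rfl⟩
    exact point_notMem_openCurve hz
  rintro z hz (hz' | hz')
  · exact hpoint hz hz'
  · obtain ⟨e', he'⟩ := mem_iUnion.1 hz'
    rw [deleteEdge, curve_restrict] at he'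
    have hne : (e' : Sym2 V) ≠ e := fun h ↦ by simpa [h] using e'.2
    exact hpoint hz <| curve_inter_curve_subset (fun h ↦ hne (congrArg Subtype.val h))
      ⟨he', openCurve_subset_curve hz⟩

theorem carrier_deleteEdge_inter_curve_subset (he : (e : Sym2 V) = s(u, v)) :
    (E.deleteEdge e).carrier ∩ E.curve e ⊆ {E.point u, E.point v} := by
  rintro z ⟨hz, hze⟩
  rw [curve_eq_union he] at hze
  exact hze.resolve_left fun h ↦ openCurve_subset_compl_carrier_deleteEdge h hz

theorem openCurve_subset_connectedComponentIn {c : ℂ} (hc : c ∈ E.openCurve e) :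
    E.openCurve e ⊆ connectedComponentIn (E.deleteEdge e).carrierᶜ c :=
  isPreconnected_openCurve.subset_connectedComponentIn hc
    openCurve_subset_compl_carrier_deleteEdge

theorem nonempty_openCurve : (E.openCurve e).Nonempty := (nonempty_Ioo.2 zero_lt_one).image _

section Finite

variable [Finite V]

theorem exists_isSeparatedBy_succ (he : ¬ G.IsBridge e) {n : ℕ} {x : Fin n → ℂ}
    (hx : IsSeparatedBy (E.deleteEdge e).carrier x) :
    ∃ y : Fin (n + 1) → ℂ, IsSeparatedBy E.carrier y := by
  obtain ⟨⟨u, v⟩, huv⟩ := Sym2.mk_surjective (e : Sym2 V)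
  obtain ⟨c, hc⟩ := E.nonempty_openCurve (e := e)
  set K := (E.deleteEdge e).carrier
  set U := connectedComponentIn Kᶜ c
  have hcarrier : K ∪ E.curve e = E.carrier := carrier_deleteEdge_union_curve
  have hcurve : E.curve e = E.openCurve e ∪ {E.point u, E.point v} := curve_eq_union huv.symm
  have hUK : U ⊆ Kᶜ := connectedComponentIn_subset _ _
  have hopen : E.openCurve e ⊆ U := openCurve_subset_connectedComponentIn hc
  have hreach : (G.deleteEdges {(e : Sym2 V)}).Reachable v u := by
    rw [← huv] at he ⊢
    exact (not_not.1 (mt isBridge_iff.2 he)).symm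
  have hne : u ≠ v := by
    rintro rfl
    exact G.not_isDiag_of_mem_edgeSet e.2 (huv ▸ Sym2.mk_isDiag_iff.2 rfl)
  have hdiff : U \ E.curve e = U \ E.carrier := by
    rw [← hcarrier, ← sdiff_sdiff, (subset_compl_iff_disjoint_right.1 hUK).sdiff_eq_left]
  have hjoined : JoinedIn (E.curve e) (E.point v) (E.point u) :=
    isPathConnected_curve.joinedIn _ (by simp [hcurve]) _ (by simp [hcurve])
  obtain ⟨p, hp, q, hq, hpq⟩ := exists_connectedComponentIn_ne (K := K) (U := U)
    isCompact_curve.isClosed (point_injective.ne hne) (joinedIn_carrier hreach) hjoined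
    isCompact_carrier.isClosed.isOpen_compl.connectedComponentIn hUK
    (hcurve.trans_subset (union_subset_union_left _ hopen))
  rw [hcarrier] at hpq
  rw [hdiff] at hp hq
  refine hx.exists_succ (hcarrier ▸ subset_union_left) ?_ hp hq hpq
  rw [← hcarrier, union_sdiff_left, hcurve]
  rintro z ⟨hz | rfl | rfl, hzK⟩
  · exact hopen hz
  all_goals exact absurd (point_mem_carrier (E := E.deleteEdge e)) hzK

/-- The lower bound on the number of faces in Euler's formula. -/
theorem exists_isSeparatedBy_carrier [Nonempty V] (E : PlaneEmbedding G) :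
    ∃ n, ∃ x : Fin n → ℂ, IsSeparatedBy E.carrier x ∧
      G.edgeSet.ncard + 2 ≤ n + Nat.card V := by
  induction G using WellFoundedLT.induction with
  | ind G ih =>
  by_cases hG : G.IsAcyclic
  · obtain ⟨p, hp⟩ : ∃ p, p ∉ E.carrier := by
      by_contra! h
      exact NormedSpace.unbounded_univ ℝ ℂ (eq_univ_of_forall h ▸ E.isCompact_carrier.isBounded)
    have hcard := ncard_edgeSet_lt_of_isAcyclic hG
    exact ⟨1, fun _ ↦ p, ⟨fun _ ↦ hp, Function.injective_of_subsingleton _⟩, by lia⟩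
  · obtain ⟨e, he⟩ := exists_edge_not_isBridge hG
    have hlt : G.deleteEdges {(e : Sym2 V)} < G :=
      (G.deleteEdges_le _).lt_of_ne fun h ↦ by simpa using deleteEdges_eq_self.1 h
    obtain ⟨n, x, hx, hcard⟩ := ih _ hlt (E.deleteEdge e)
    obtain ⟨y, hy⟩ := exists_isSeparatedBy_succ he hx
    have hdelete := ncard_sdiff_singleton_add_one e.2
    rw [edgeSet_deleteEdges] at hcard
    exact ⟨n + 1, y, hy, by lia⟩

end Finite

theorem mem_edgeSet_boundary : (e : Sym2 V) ∈ (E.boundary p).edgeSet ↔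
    (closure (connectedComponentIn E.carrierᶜ p) ∩ E.openCurve e).Nonempty := by
  simp [boundary, edgeSet_fromEdgeSet, G.not_isDiag_of_mem_edgeSet e.2]

theorem boundary_le : E.boundary p ≤ G := by
  rw [boundary, fromEdgeSet_le]
  rintro _ ⟨⟨e, -, rfl⟩, -⟩
  exact e.2

variable [Finite V]

/-- Otherwise the frontier of the face would lie on a drawn forest, which does not separate. -/
theorem not_isAcyclic_boundary (hp : p ∉ E.carrier) (hq : q ∉ E.carrier)
    (hpq : connectedComponentIn E.carrierᶜ p ≠ connectedComponentIn E.carrierᶜ q) :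
    ¬ (E.boundary p).IsAcyclic := by
  intro hforest
  set L := (E.restrict (boundary_le (E := E) (p := p))).carrier
  have hpL : p ∉ L := fun h ↦ hp (carrier_restrict_subset _ h)
  have hqL : q ∉ L := fun h ↦ hq (carrier_restrict_subset _ h)
  have hsame : connectedComponentIn Lᶜ p = connectedComponentIn Lᶜ q :=
    (admitsContinuousLogs_carrier hforest).connectedComponentIn_compl_eq isCompact_carrier hpL hqL
  set F := connectedComponentIn E.carrierᶜ p
  have hclosed : IsClosed E.carrier := isCompact_carrier.isClosed
  have hF : IsOpen F := hclosed.isOpen_compl.connectedComponentIn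
  have hfrontier : frontier F ⊆ L := by
    intro z hz
    obtain ⟨v, rfl⟩ | hz' := frontier_connectedComponentIn_compl_subset hclosed p hz
    · exact point_mem_carrier (E := E.restrict boundary_le)
    obtain ⟨e, he⟩ := mem_iUnion.1 hz'
    obtain hopen | ⟨v, rfl⟩ := curve_subset_union_range he
    · exact curve_subset_carrier_restrict _
        (mem_edgeSet_boundary.2 ⟨z, frontier_subset_closure hz, hopen⟩) he
    · exact point_mem_carrier (E := E.restrict boundary_le)
  have hsubset : connectedComponentIn Lᶜ p ⊆ F := by
    refine isPreconnected_connectedComponentIn.subset_of_closure_inter_subset hF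
      ⟨p, mem_connectedComponentIn hpL, mem_connectedComponentIn hp⟩ fun z ⟨hzF, hzL⟩ ↦ ?_
    by_contra hz
    exact connectedComponentIn_subset _ _ hzL (hfrontier (hF.frontier_eq ▸ ⟨hzF, hz⟩))
  exact hpq (connectedComponentIn_eq (hsubset (hsame ▸ mem_connectedComponentIn hqL)))

theorem connectedComponentIn_compl_carrier_deleteEdge_eq {c : ℂ} (hc : c ∈ E.openCurve e)
    (hp : (e : Sym2 V) ∈ (E.boundary p).edgeSet) :
    connectedComponentIn (E.deleteEdge e).carrierᶜ p =
      connectedComponentIn (E.deleteEdge e).carrierᶜ c := by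
  obtain ⟨z, hzp, hze⟩ := mem_edgeSet_boundary.1 hp
  obtain ⟨w, hwc, hwp⟩ := mem_closure_iff.1 hzp _
    isCompact_carrier.isClosed.isOpen_compl.connectedComponentIn
    (openCurve_subset_connectedComponentIn hc hze)
  rw [connectedComponentIn_eq hwc]
  exact connectedComponentIn_eq <|
    connectedComponentIn_mono p (compl_subset_compl.2 (carrier_restrict_subset _)) hwp

theorem card_le_two_of_mem_boundary {ι : Type*} [Fintype ι] {x : ι → ℂ}
    (hx : IsSeparatedBy E.carrier x) (he : ∀ i, (e : Sym2 V) ∈ (E.boundary (x i)).edgeSet) :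
    Fintype.card ι ≤ 2 := by
  obtain ⟨⟨u, v⟩, huv⟩ := Sym2.mk_surjective (e : Sym2 V)
  obtain ⟨c, hc⟩ := E.nonempty_openCurve (e := e)
  have hsame (i) := connectedComponentIn_compl_carrier_deleteEdge_eq hc (he i)
  rw [← carrier_deleteEdge_union_curve (e := e)] at hx
  have hend {w} (hw : w ∈ (e : Sym2 V)) : E.point w ∈ (E.deleteEdge e).carrier ∩ E.curve e :=
    ⟨point_mem_carrier (E := E.deleteEdge e), point_mem_curve.2 hw⟩
  exact hx.card_le_two isCompact_carrier isCompact_curve admitsContinuousLogs_curve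
    (hend (huv ▸ Sym2.mem_mk_left u v)) (hend (huv ▸ Sym2.mem_mk_right u v))
    (carrier_deleteEdge_inter_curve_subset huv.symm) fun i j ↦ (hsame i).trans (hsame j).symm

theorem mul_le_two_mul_ncard_edgeSet {g n : ℕ} (hg : g ≤ G.egirth) (hn : 2 ≤ n) {x : Fin n → ℂ}
    (hx : IsSeparatedBy E.carrier x) : n * g ≤ G.edgeSet.ncard * 2 := by
  classical
  have := Fintype.ofFinite G.edgeSet
  have : Nontrivial (Fin n) := Fin.nontrivial_iff_two_le.2 hn
  rw [ncard_eq_toFinset_card', ← Fintype.card_fin n, ← Finset.card_univ, toFinset_card,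
    ← Finset.card_univ]
  refine Finset.card_mul_le_card_mul
    (fun i (e : G.edgeSet) ↦ (e : Sym2 V) ∈ (E.boundary (x i)).edgeSet)
    (fun i _ ↦ ?_) fun e _ ↦ ?_
  · obtain ⟨j, hj⟩ := exists_ne i
    have hcycle := not_isAcyclic_boundary (hx.1 i) (hx.1 j) (hx.2.ne hj.symm)
    refine (le_ncard_edgeSet_of_le_egirth hcycle (hg.trans (egirth_anti boundary_le))).trans ?_
    rw [← ncard_coe_finset, Finset.coe_bipartiteAbove,
      ← ncard_image_of_injective _ Subtype.val_injective]
    exact ncard_le_ncard fun e he ↦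
      ⟨⟨e, edgeSet_mono boundary_le he⟩, ⟨Finset.mem_univ _, he⟩, rfl⟩
  · rw [Finset.bipartiteBelow, ← Fintype.card_subtype]
    exact card_le_two_of_mem_boundary (e := e) (x := fun i ↦ x i)
      ⟨fun i ↦ hx.1 i, hx.2.comp Subtype.val_injective⟩ fun i ↦ i.2

theorem girth_mul_le [Nonempty V] (E : PlaneEmbedding G) {g : ℕ} (hg : g ≤ G.egirth) :
    g * (G.edgeSet.ncard + 1) ≤ g * Nat.card V + 2 * G.edgeSet.ncard := by
  obtain ⟨n, x, hx, hcard⟩ := E.exists_isSeparatedBy_carrier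
  obtain hn | hn := le_or_gt n 1
  · nlinarith
  · nlinarith [mul_le_two_mul_ncard_edgeSet hg hn hx]

end Euler

end PlaneEmbedding

section Sparsity

open Finset

variable {V : Type*} {G H : SimpleGraph V} {d : ℚ}

/-- The maximum average degree of `G` is less than `d`: every nonempty finite induced subgraph
with `n` vertices and `m` edges satisfies `2 * m < d * n`. -/
def MaxAverageDegreeLT (G : SimpleGraph V) (d : ℚ) : Prop :=
  ∀ s : Finset V, s.Nonempty → 2 * ((G.induce (s : Set V)).edgeSet.ncard : ℚ) < d * #s

theorem MaxAverageDegreeLT.mono_left (hG : MaxAverageDegreeLT G d) (h : H ≤ G) :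
    MaxAverageDegreeLT H d := fun s hs ↦ by
  have hle : (H.induce (s : Set V)).edgeSet.ncard ≤ (G.induce (s : Set V)).edgeSet.ncard :=
    Set.ncard_le_ncard (edgeSet_mono (comap_monotone _ h))
  calc 2 * ((H.induce (s : Set V)).edgeSet.ncard : ℚ)
      ≤ 2 * ((G.induce (s : Set V)).edgeSet.ncard : ℚ) := by gcongr
    _ < d * #s := hG s hs

theorem MaxAverageDegreeLT.two_mul_card_edgeFinset_lt [Fintype V] [DecidableRel G.Adj]
    (hG : MaxAverageDegreeLT G d) (hne : G ≠ ⊥) :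
    2 * (#G.edgeFinset : ℚ) < d * #{v | 0 < G.degree v} := by
  classical
  obtain ⟨u, v, huv⟩ := ne_bot_iff_exists_adj.1 hne
  have hsupp : (({v | 0 < G.degree v} : Finset V) : Set V) = G.support := by
    ext; simp [degree_pos_iff_mem_support]
  have key := hG {v | 0 < G.degree v} ⟨u, by simpa [G.degree_pos_iff_exists_adj] using ⟨v, huv⟩⟩
  rwa [hsupp, ← coe_edgeFinset, Set.ncard_coe_finset, card_edgeFinset_induce_support] at key

theorem PlaneEmbedding.maxAverageDegreeLT (E : PlaneEmbedding G) {g : ℕ} (hg₂ : 2 < g)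
    (hg : g ≤ G.egirth) : MaxAverageDegreeLT G (2 * g / (g - 2)) := by
  intro s hs
  have : Nonempty s := hs.to_subtype
  have key := (E.comap (Copy.induce G s)).girth_mul_le
    (hg.trans (IsContained.egirth_le ⟨Copy.induce G s⟩))
  rw [Nat.card_coe_set_eq, Set.ncard_coe_finset] at key
  have hg₀ : (0 : ℚ) < g - 2 := by
    rw [sub_pos]
    exact_mod_cast hg₂
  rw [div_mul_eq_mul_div, lt_div_iff₀ hg₀]
  have key' : (g : ℚ) * ((G.induce (s : Set V)).edgeSet.ncard + 1) ≤
      g * #s + 2 * (G.induce (s : Set V)).edgeSet.ncard := mod_cast key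
  linarith

end Sparsity

section Discharging

open Finset

variable {V : Type*} [Fintype V] {G : SimpleGraph V} [DecidableRel G.Adj] {D : ℕ} {u v : V}

variable (G) in
/-- A vertex that can be coloured greedily when all degrees are at most `D`: it has few neighbours
and few vertices at distance two. -/
def IsLight (D : ℕ) (v : V) : Prop :=
  G.degree v ≤ 5 ∧ ∑ w ∈ G.neighborFinset v, (G.degree w - 1) ≤ D + 4

theorem isLight_of_subset (hD : ∀ v, G.degree v ≤ D) (hv : G.degree v ≤ 5)
    {T : Finset V} (hT : T ⊆ G.neighborFinset v) (hcard : G.degree v ≤ #T + 1)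
    (hsum : ∑ w ∈ T, (G.degree w - 1) ≤ 5) : IsLight G D v := by
  classical
  refine ⟨hv, ?_⟩
  obtain h0 | hpos := Nat.eq_zero_or_pos (G.degree v)
  · have hempty : G.neighborFinset v = ∅ := by
      rwa [← card_eq_zero, card_neighborFinset_eq_degree]
    simp [hempty]
  have hrest : #(G.neighborFinset v \ T) ≤ 1 := by
    rw [card_sdiff_of_subset hT, card_neighborFinset_eq_degree]
    lia
  have hD1 := hD v
  calc ∑ w ∈ G.neighborFinset v, (G.degree w - 1)
      = ∑ w ∈ G.neighborFinset v \ T, (G.degree w - 1) + ∑ w ∈ T, (G.degree w - 1) :=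
        (sum_sdiff hT).symm
    _ ≤ #(G.neighborFinset v \ T) * (D - 1) + 5 := by
        gcongr
        exact sum_le_card_nsmul _ _ _ fun w _ ↦ Nat.sub_le_sub_right (hD w) 1
    _ ≤ 1 * (D - 1) + 5 := by gcongr
    _ ≤ D + 4 := by lia

theorem isLight_of_degree_eq_two (hD : ∀ v, G.degree v ≤ D) (hv : G.degree v = 2)
    (huv : G.Adj v u) (hu : G.degree u ≤ 5) : IsLight G D v := by
  exact isLight_of_subset hD (by lia) (T := {u}) (by simpa using huv) (by simp [hv])
    (by simp; lia)

variable (G) in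
/-- In the discharging argument every vertex sends one unit of charge to each neighbour of
degree two and, if its own degree is at least six, to each neighbour of degree three. These are
the neighbours to which `v` sends charge. -/
def donees (v : V) : Finset V :=
  {u ∈ G.neighborFinset v | G.degree u = 2 ∨ G.degree u = 3 ∧ 6 ≤ G.degree v}

variable (G) in
/-- The neighbours from which `v` receives charge, see `donees`. -/
def donors (v : V) : Finset V :=
  {u ∈ G.neighborFinset v | G.degree v = 2 ∨ G.degree v = 3 ∧ 6 ≤ G.degree u}

theorem sum_card_donees_eq_sum_card_donors : ∑ v, #(donees G v) = ∑ v, #(donors G v) := by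
  classical
  convert sum_card_bipartiteAbove_eq_sum_card_bipartiteBelow (s := univ) (t := univ)
    (fun v u ↦ u ∈ donees G v) using 3 with v _ v _
  · simp [bipartiteAbove]
  · ext u
    simp [bipartiteBelow, donees, donors, G.adj_comm]

theorem card_donees_le : #(donees G v) ≤ G.degree v :=
  card_filter_le _ _

theorem donors_eq_of_degree_eq_two (hv : G.degree v = 2) : donors G v = G.neighborFinset v := by
  simp [donors, hv]

theorem degree_eq_two_of_mem_donees (hv : G.degree v ≤ 5) (hu : u ∈ donees G v) :
    G.degree u = 2 := by
  have := (mem_filter.1 hu).2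
  lia

theorem adj_of_mem_donees (hu : u ∈ donees G v) : G.Adj v u :=
  (mem_neighborFinset ..).1 (mem_filter.1 hu).1

theorem sum_degree_sub_one_donees (hv : G.degree v ≤ 5) :
    ∑ w ∈ donees G v, (G.degree w - 1) = #(donees G v) := by
  rw [card_eq_sum_ones]
  exact sum_congr rfl fun w hw ↦ by rw [degree_eq_two_of_mem_donees hv hw]

theorem isLight_of_mem_donees (hD : ∀ v, G.degree v ≤ D) (hv : G.degree v ≤ 5)
    (hu : u ∈ donees G v) : IsLight G D u :=
  isLight_of_degree_eq_two hD (degree_eq_two_of_mem_donees hv hu) (adj_of_mem_donees hu).symm hv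

theorem card_donees_add_one_lt (hD : ∀ v, G.degree v ≤ D) (hv : G.degree v ≤ 5)
    (hlight : ¬ IsLight G D v) : #(donees G v) + 1 < G.degree v := by
  by_contra! h
  have hle := card_donees_le (G := G) (v := v)
  exact hlight (isLight_of_subset hD hv (filter_subset _ _) h
    ((sum_degree_sub_one_donees hv).trans_le (hle.trans hv)))

theorem two_le_card_donors (hD : ∀ v, G.degree v ≤ D) (hv : G.degree v = 3)
    (hu : u ∈ donees G v) (hlight : ¬ IsLight G D v) : 2 ≤ #(donors G v) := by
  classical
  have huN : u ∈ G.neighborFinset v := (mem_filter.1 hu).1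
  have hsub : (G.neighborFinset v).erase u ⊆ donors G v := by
    intro w hw
    obtain ⟨hwu, hwN⟩ := mem_erase.1 hw
    refine mem_filter.2 ⟨hwN, Or.inr ⟨hv, ?_⟩⟩
    by_contra! hw6
    refine hlight (isLight_of_subset hD (T := {u, w}) (by lia) ?_ ?_ ?_)
    · exact insert_subset huN (singleton_subset_iff.2 hwN)
    · rw [card_pair hwu.symm, hv]
    · rw [sum_pair hwu.symm, degree_eq_two_of_mem_donees (by lia) hu]
      lia
  calc 2 = #((G.neighborFinset v).erase u) := by
        rw [card_erase_of_mem huN, card_neighborFinset_eq_degree, hv]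
    _ ≤ #(donors G v) := card_le_card hsub

/-- Every vertex starts with charge `2 * G.degree v - 6`; the total is negative in a graph of
maximum average degree less than three. -/
theorem six_add_card_donees_le (hD : ∀ v, G.degree v ≤ D)
    (hlight : ∀ u v, G.Adj u v → IsLight G D u → ¬ IsLight G D v) (hv : 2 ≤ G.degree v) :
    6 + #(donees G v) ≤ 2 * G.degree v + #(donors G v) := by
  have hle := card_donees_le (G := G) (v := v)
  obtain h6 | h5 := le_or_gt 6 (G.degree v)
  · lia
  replace h5 : G.degree v ≤ 5 := by lia
  have htwo (h2 : G.degree v = 2) : #(donors G v) = 2 := by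
    rw [donors_eq_of_degree_eq_two h2, card_neighborFinset_eq_degree, h2]
  obtain h0 | ⟨u, hu⟩ := (donees G v).eq_empty_or_nonempty
  · rw [h0, card_empty]
    obtain h2 | h3 : G.degree v = 2 ∨ 3 ≤ G.degree v := by lia
    · have := htwo h2
      lia
    · lia
  · have hnot : ¬ IsLight G D v :=
      hlight u v (adj_of_mem_donees hu).symm (isLight_of_mem_donees hD h5 hu)
    have hlt := card_donees_add_one_lt hD h5 hnot
    obtain h3 | hne : G.degree v = 3 ∨ G.degree v ≠ 3 := em _
    · have := two_le_card_donors hD h3 hu hnot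
      lia
    · have := card_pos.2 ⟨u, hu⟩
      lia

theorem exists_degree_eq_one_or_adj_isLight (hG : MaxAverageDegreeLT G 3) (hne : G ≠ ⊥)
    (hD : ∀ v, G.degree v ≤ D) :
    (∃ v, G.degree v = 1) ∨ ∃ u v, G.Adj u v ∧ IsLight G D u ∧ IsLight G D v := by
  by_contra! h
  obtain ⟨hleaf, hlight⟩ := h
  have hcharge (v : V) : (if 0 < G.degree v then 6 else 0) + #(donees G v) ≤
      2 * G.degree v + #(donors G v) := by
    obtain h0 | hpos := Nat.eq_zero_or_pos (G.degree v)
    · have := card_donees_le (G := G) (v := v)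
      simp only [h0, lt_irrefl, if_false]
      lia
    · rw [if_pos hpos]
      exact six_add_card_donees_le hD hlight (by have := hleaf v; lia)
  have htotal := sum_le_sum fun v (_ : v ∈ univ) ↦ hcharge v
  simp only [sum_add_distrib, ← mul_sum, sum_degrees_eq_twice_card_edges,
    sum_card_donees_eq_sum_card_donors, ← sum_filter, sum_const, smul_eq_mul] at htotal
  have hsparse : 2 * #G.edgeFinset < 3 * #{v | 0 < G.degree v} := by
    exact_mod_cast hG.two_mul_card_edgeFinset_lt hne
  lia

end Discharging

section Colouring

open Finset

variable {V α : Type*} {G : SimpleGraph V} [DecidableRel G.Adj] [DecidableEq α] {k : ℕ}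
  {S : Finset V} {c : V → α} {u v w : V} {a : α}

variable (G) in
/-- The colouring `c` is `k`-frugal when only the vertices in `S` are regarded as coloured. The
bound on the colours around a vertex is also imposed at the vertices outside `S`. -/
def IsFrugalOn (k : ℕ) (S : Finset V) (c : V → α) : Prop :=
  (∀ u ∈ S, ∀ v ∈ S, G.Adj u v → c u ≠ c v) ∧ ∀ v a, #{u ∈ S | G.Adj v u ∧ c u = a} ≤ k

theorem IsFrugalOn.isFrugalColoring [Fintype V] (hc : IsFrugalOn G k univ c) :
    G.IsFrugalColoring k c := by
  refine ⟨fun u v ↦ hc.1 u (mem_univ u) v (mem_univ v), fun v a ↦ ?_⟩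
  convert hc.2 v a
  rw [← Set.ncard_coe_finset]
  congr 1
  ext
  simp

theorem IsFrugalOn.update_insert [DecidableEq V] (hc : IsFrugalOn G k S c) (hv : v ∉ S)
    (hproper : ∀ u, G.Adj v u → c u ≠ a)
    (hfrugal : ∀ w, G.Adj v w → #{u ∈ S | G.Adj w u ∧ c u = a} < k) :
    IsFrugalOn G k (insert v S) (Function.update c v a) := by
  have hold {u : V} (hu : u ∈ S) : Function.update c v a u = c u :=
    Function.update_of_ne (ne_of_mem_of_not_mem hu hv) _ _
  have hnew {u : V} (hu : G.Adj v u) : Function.update c v a u ≠ a := by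
    rw [Function.update_of_ne hu.ne']
    exact hproper u hu
  refine ⟨fun x hx y hy hxy ↦ ?_, fun w b ↦ ?_⟩
  · obtain rfl | hx := mem_insert.1 hx
    · simpa using (hnew hxy).symm
    obtain rfl | hy := mem_insert.1 hy
    · simpa using hnew hxy.symm
    rw [hold hx, hold hy]
    exact hc.1 x hx y hy hxy
  · rw [filter_insert, Function.update_self,
      filter_congr fun u hu ↦ by rw [hold hu]]
    split_ifs with h
    · obtain ⟨hwv, rfl⟩ := h
      exact (card_insert_le _ _).trans (hfrugal w hwv.symm)
    · exact hc.2 w b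

section Palette

variable [Fintype α]

variable (G) in
/-- The colours that appear at least `k` times among the coloured neighbours of `w`, so that they
are not available for a further neighbour of `w`. -/
def saturatedColors (k : ℕ) (S : Finset V) (c : V → α) (w : V) : Finset α :=
  {a | k ≤ #{u ∈ S | G.Adj w u ∧ c u = a}}

variable [Fintype V]

theorem card_saturatedColors_mul_le (hv : v ∉ S) (hvw : G.Adj v w) :
    #(saturatedColors G k S c w) * k ≤ G.degree w - 1 := by
  classical
  calc #(saturatedColors G k S c w) * k
      ≤ ∑ a ∈ saturatedColors G k S c w, #{u ∈ S | G.Adj w u ∧ c u = a} :=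
        card_nsmul_le_sum _ _ _ fun a ha ↦ (mem_filter.1 ha).2
    _ ≤ #{u ∈ S | G.Adj w u} := by
        simp only [← filter_filter]
        rw [sum_card_fiberwise_eq_card_filter]
        exact card_filter_le _ _
    _ ≤ #((G.neighborFinset w).erase v) := card_le_card fun u hu ↦ by
        obtain ⟨huS, huw⟩ := mem_filter.1 hu
        exact mem_erase.2 ⟨ne_of_mem_of_not_mem huS hv, (mem_neighborFinset ..).2 huw⟩
    _ = G.degree w - 1 := by
        rw [card_erase_of_mem ((mem_neighborFinset ..).2 hvw.symm), card_neighborFinset_eq_degree]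

theorem exists_color_notMem_saturatedColors (hk : 1 ≤ k) (hv : v ∉ S)
    (hcard : G.degree v + (∑ w ∈ G.neighborFinset v, (G.degree w - 1)) / k < Fintype.card α) :
    ∃ a, ∀ w, G.Adj v w → c w ≠ a ∧ a ∉ saturatedColors G k S c w := by
  let forbidden := (G.neighborFinset v).image c ∪
    (G.neighborFinset v).biUnion (saturatedColors G k S c)
  have hsaturated : #((G.neighborFinset v).biUnion (saturatedColors G k S c)) ≤
      (∑ w ∈ G.neighborFinset v, (G.degree w - 1)) / k := by
    rw [Nat.le_div_iff_mul_le hk]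
    calc _ ≤ (∑ w ∈ G.neighborFinset v, #(saturatedColors G k S c w)) * k := by
          gcongr
          exact card_biUnion_le
      _ ≤ ∑ w ∈ G.neighborFinset v, (G.degree w - 1) := by
          rw [sum_mul]
          exact sum_le_sum fun w hw ↦
            card_saturatedColors_mul_le hv ((mem_neighborFinset ..).1 hw)
  have hforbidden : #forbidden < #(univ : Finset α) :=
    ((card_union_le _ _).trans (add_le_add card_image_le hsaturated)).trans_lt hcard
  obtain ⟨a, -, ha⟩ := exists_mem_notMem_of_card_lt_card hforbidden
  simp only [forbidden, mem_union, mem_image, mem_biUnion, mem_neighborFinset, not_or,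
    not_exists, not_and] at ha
  exact ⟨a, fun w hw ↦ ⟨ha.1 w hw, ha.2 w hw⟩⟩

theorem IsFrugalOn.exists_insert [DecidableEq V] (hc : IsFrugalOn G k S c) (hk : 1 ≤ k)
    (hv : v ∉ S)
    (hcard : G.degree v + (∑ w ∈ G.neighborFinset v, (G.degree w - 1)) / k < Fintype.card α) :
    ∃ c' : V → α, IsFrugalOn G k (insert v S) c' := by
  obtain ⟨a, ha⟩ := exists_color_notMem_saturatedColors (c := c) hk hv hcard
  refine ⟨_, hc.update_insert hv (fun u hu ↦ (ha u hu).1) fun w hw ↦ ?_⟩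
  simpa [saturatedColors] using (ha w hw).2

end Palette

section DeleteEdges

variable [Fintype V] [DecidableEq V]

theorem IsFrugalOn.of_deleteEdges (hc : IsFrugalOn (G.deleteEdges {s(u, v)}) k univ c) :
    IsFrugalOn G k {u, v}ᶜ c := by
  have hadj {x y : V} (hxy : G.Adj x y) (hy : y ∈ ({u, v} : Finset V)ᶜ) :
      (G.deleteEdges {s(u, v)}).Adj x y := by
    simp only [mem_compl, mem_insert, mem_singleton, not_or] at hy
    simp [deleteEdges_adj, hxy, hy]
  refine ⟨fun x _ y hy hxy ↦ hc.1 x (mem_univ x) y (mem_univ y) (hadj hxy hy), fun x a ↦ ?_⟩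
  refine (card_le_card fun y hy ↦ ?_).trans (hc.2 x a)
  obtain ⟨hyS, hxy, hya⟩ := mem_filter.1 hy
  exact mem_filter.2 ⟨mem_univ y, hadj hxy hyS, hya⟩

theorem IsFrugalOn.of_deleteEdges_of_degree_eq_one (hk : 1 ≤ k) (hv : G.degree v = 1)
    (hc : IsFrugalOn (G.deleteEdges {s(u, v)}) k univ c) : IsFrugalOn G k {v}ᶜ c := by
  have hadj {x y : V} (hxy : G.Adj x y) (hx : x ≠ v) (hy : y ∈ ({v} : Finset V)ᶜ) :
      (G.deleteEdges {s(u, v)}).Adj x y := by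
    simp only [mem_compl, mem_singleton] at hy
    simp [deleteEdges_adj, hxy, hx, hy]
  refine ⟨fun x hx y hy hxy ↦ hc.1 x (mem_univ x) y (mem_univ y) (hadj hxy (by simpa using hx) hy),
    fun x a ↦ ?_⟩
  obtain rfl | hx := eq_or_ne x v
  · calc #{y ∈ {x}ᶜ | G.Adj x y ∧ c y = a} ≤ #(G.neighborFinset x) :=
          card_le_card fun y hy ↦ (mem_neighborFinset ..).2 (mem_filter.1 hy).2.1
      _ = 1 := (G.card_neighborFinset_eq_degree x).trans hv
      _ ≤ k := hk
  · refine (card_le_card fun y hy ↦ ?_).trans (hc.2 x a)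
    obtain ⟨hyS, hxy, hya⟩ := mem_filter.1 hy
    exact mem_filter.2 ⟨mem_univ y, hadj hxy hx hyS, hya⟩

end DeleteEdges

end Colouring

section GreedyColouring

open Finset

variable {V α : Type*} [Fintype V] {G : SimpleGraph V} [DecidableRel G.Adj] {k D : ℕ} {u v : V}

theorem IsLight.degree_add_sum_div_lt (hv : IsLight G D v) :
    G.degree v + (∑ w ∈ G.neighborFinset v, (G.degree w - 1)) / k < (D + 4) / k + 6 := by
  have := Nat.div_le_div_right (c := k) hv.2
  have := hv.1
  lia

theorem isLight_of_degree_eq_one (hD : ∀ v, G.degree v ≤ D) (hv : G.degree v = 1) :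
    IsLight G D v :=
  isLight_of_subset hD (by lia) (empty_subset _) (by simp [hv]) (by simp)

variable [Fintype α] [DecidableEq α]

theorem exists_isFrugalOn_univ (hG : MaxAverageDegreeLT G 3) (hk : 1 ≤ k)
    (hD : ∀ v, G.degree v ≤ D) (hα : (D + 4) / k + 6 ≤ Fintype.card α) :
    ∃ c : V → α, IsFrugalOn G k univ c := by
  classical
  induction G using WellFoundedLT.induction generalizing ‹DecidableRel G.Adj› with | _ G ih
  have : Nonempty α := Fintype.card_pos_iff.1 (by lia)
  obtain rfl | hne := eq_or_ne G ⊥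
  · exact ⟨fun _ ↦ Classical.arbitrary α, by simp [IsFrugalOn]⟩
  have hdelete {u v : V} (huv : G.Adj u v) :
      ∃ c : V → α, IsFrugalOn (G.deleteEdges {s(u, v)}) k univ c :=
    ih _ (lt_of_le_of_ne (G.deleteEdges_le _) (by simpa using huv))
      (hG.mono_left (G.deleteEdges_le _))
      fun w ↦ (degree_le_of_le (G.deleteEdges_le _)).trans (hD w)
  have hgreedy {S : Finset V} {c : V → α} (hc : IsFrugalOn G k S c) {v : V} (hv : v ∉ S)
      (hlight : IsLight G D v) : ∃ c' : V → α, IsFrugalOn G k (insert v S) c' :=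
    hc.exists_insert hk hv (hlight.degree_add_sum_div_lt.trans_le hα)
  obtain ⟨v, hv⟩ | ⟨u, v, huv, hu, hv⟩ := exists_degree_eq_one_or_adj_isLight hG hne hD
  · obtain ⟨u, hvu⟩ := (G.degree_pos_iff_exists_adj v).1 (by lia)
    obtain ⟨c, hc⟩ := hdelete hvu.symm
    obtain ⟨c, hc⟩ := hgreedy (hc.of_deleteEdges_of_degree_eq_one hk hv) (by simp)
      (isLight_of_degree_eq_one hD hv)
    exact ⟨c, by simpa using hc⟩
  · obtain ⟨c, hc⟩ := hdelete huv
    obtain ⟨c, hc⟩ := hgreedy hc.of_deleteEdges (v := u) (by simp) hu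
    obtain ⟨c, hc⟩ := hgreedy hc (v := v) (by simp [huv.ne']) hv
    have huniv : insert v (insert u ({u, v} : Finset V)ᶜ) = univ := by
      ext
      simp only [mem_insert, mem_compl, mem_singleton, mem_univ]
      tauto
    exact ⟨c, huniv ▸ hc⟩

end GreedyColouring

section ChromaticNumber

variable {V α β : Type*} {G : SimpleGraph V} {k : ℕ} {c : V → α}

theorem isFrugalColoring_comp_of_injective {f : α → β} (hf : f.Injective)
    (hc : G.IsFrugalColoring k c) : G.IsFrugalColoring k (f ∘ c) := by
  refine ⟨fun u v huv ↦ hf.ne (hc.1 u v huv), fun v b ↦ ?_⟩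
  by_cases hb : b ∈ Set.range f
  · obtain ⟨a, rfl⟩ := hb
    simpa only [Function.comp_apply, hf.eq_iff] using hc.2 v a
  · have hempty : {u | u ∈ G.neighborSet v ∧ (f ∘ c) u = b} = ∅ :=
      Set.eq_empty_of_forall_notMem fun u hu ↦ hb ⟨c u, hu.2⟩
    rw [hempty, Set.ncard_empty]
    exact zero_le

theorem frugalChromaticNumber_le_card [Fintype α] (hc : G.IsFrugalColoring k c) :
    G.frugalChromaticNumber k ≤ Fintype.card α :=
  let f (a : α) : ℕ := Fintype.equivFin α a
  Nat.sInf_le ⟨f ∘ c, fun v ↦ (Fintype.equivFin α (c v)).is_lt,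
    isFrugalColoring_comp_of_injective
      (Fin.val_injective.comp (Fintype.equivFin α).injective : f.Injective) hc⟩

end ChromaticNumber

theorem frugalChromaticNumber_girth_six_general {V : Type*} [Fintype V] {G : SimpleGraph V}
    [DecidableRel G.Adj] (hG : MaxAverageDegreeLT G 3) {k : ℕ} (hk : 1 ≤ k) :
    G.frugalChromaticNumber k ≤ (G.maxDegree + 4) / k + 6 := by
  obtain ⟨c, hc⟩ := exists_isFrugalOn_univ (α := Fin ((G.maxDegree + 4) / k + 6)) hG hk
    G.degree_le_maxDegree (by simp)
  simpa using frugalChromaticNumber_le_card hc.isFrugalColoring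

/-- For `k ≥ 1` and a planar graph `G` of girth at least `6`,
`χ_k(G) ≤ ⌈(Δ(G) + 4)/k⌉ + 6` (ceiling written `(a + k - 1)/k`). -/
theorem frugalChromaticNumber_girth_six {V : Type*} [Fintype V] (G : SimpleGraph V)
    [DecidableRel G.Adj] (hG : G.IsPlanar) (k : ℕ) (hk : 1 ≤ k)
    (hgirth : (6 : ℕ∞) ≤ G.egirth) :
    G.frugalChromaticNumber k ≤ (G.maxDegree + 4 + (k - 1)) / k + 6 := by
  obtain ⟨E⟩ := hG
  have hmad : MaxAverageDegreeLT G 3 := by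
    convert E.maxAverageDegreeLT (g := 6) (by norm_num) hgirth using 1
    norm_num
  calc G.frugalChromaticNumber k ≤ (G.maxDegree + 4) / k + 6 :=
        frugalChromaticNumber_girth_six_general hmad hk
    _ ≤ (G.maxDegree + 4 + (k - 1)) / k + 6 :=
        Nat.add_le_add_right (Nat.div_le_div_right (Nat.le_add_right _ _)) 6
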